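/- arXiv:1707.09042 — 2 statements merged into one kernel-verified Lean document; each statement's English description precedes it below -/
import Mathlib

section
/- Fix a rational α ∈ (0,1/2). Then the limits below exist and lim_{d→∞} lim_{N→∞} ( E_{G(N,d/N)}[MCUT_α] − N d α(1−α) ) / (√d · N) = lim_{N→∞} (1/(4N)) E[ max_{σ ∈ S_N(α)} H_0(σ) ], where N ranges over integers with αN an integer. -/
open Finset MeasureTheory

noncomputable section

/-- Number of edges of a simple graph on `Fin N`. -/
def numEdges {N : ℕ} (G : SimpleGraph (Fin N)) : ℕ := Nat.card G.edgeSet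

/-- Number of edges of `G` with exactly one endpoint in `s` (counted as ordered pairs
with the first coordinate in `s`, so each crossing edge is counted once). -/
def cutCount {N : ℕ} (G : SimpleGraph (Fin N)) (s : Finset (Fin N)) : ℕ :=
  Nat.card {p : Fin N × Fin N // p.1 ∈ s ∧ p.2 ∉ s ∧ G.Adj p.1 p.2}

/-- `MCUT_α(G)`: the maximum over vertex sets `V₁` of size `αN` of the number of
edges of `G` with exactly one endpoint in `V₁`. -/
def mcut {N : ℕ} (α : ℚ) (G : SimpleGraph (Fin N)) : ℕ :=
  (Finset.powersetCard ⌊α * (N : ℚ)⌋₊ (Finset.univ : Finset (Fin N))).sup fun s => cutCount G s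

/-- `α N` is a (nonnegative) integer. -/
def alphaIntegral (α : ℚ) (N : ℕ) : Prop := ∃ k : ℕ, α * (N : ℚ) = (k : ℚ)

/-- Expectation of `f` under the Erdős–Rényi measure `G(N,p)`: each potential edge is
present independently with probability `p`, so a graph with `e` edges has probability
`p^e (1-p)^(C(N,2) - e)`. -/
def erExp (N : ℕ) (p : ℝ) (f : SimpleGraph (Fin N) → ℝ) : ℝ :=
  ∑ G : SimpleGraph (Fin N),
    p ^ numEdges G * (1 - p) ^ (N.choose 2 - numEdges G) * f G

/-- Probability of an event under the Erdős–Rényi measure `G(N,p)`. -/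
def erProb (N : ℕ) (p : ℝ) (E : Set (SimpleGraph (Fin N))) : ℝ :=
  erExp N p (Set.indicator E fun _ => 1)

/-- `G` is `d`-regular. -/
def IsDReg {N : ℕ} (d : ℕ) (G : SimpleGraph (Fin N)) : Prop :=
  ∀ v, Nat.card (G.neighborSet v) = d

open Classical in
/-- The finite set of simple `d`-regular graphs on `N` labeled vertices. -/
def regFinset (N d : ℕ) : Finset (SimpleGraph (Fin N)) :=
  Finset.univ.filter fun G => IsDReg d G

/-- Expectation of `f` under the uniform measure `R(N,d)` on simple `d`-regular graphs. -/
def regExp (N d : ℕ) (f : SimpleGraph (Fin N) → ℝ) : ℝ :=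
  (∑ G ∈ regFinset N d, f G) / ((regFinset N d).card : ℝ)

/-- Probability of an event under the uniform measure `R(N,d)`. -/
def regProb (N d : ℕ) (E : Set (SimpleGraph (Fin N))) : ℝ :=
  regExp N d (Set.indicator E fun _ => 1)

end

open Finset MeasureTheory ProbabilityTheory

noncomputable section

/-- The law of the independent Gaussian entries used to build a GOE matrix: a product of
centered real Gaussians indexed by pairs `(i,j)`, with variance `2` on the diagonal and `1`
off the diagonal.  (Only the coordinates with `i ≤ j` are ever read off, so this realizes a
GOE matrix: the entries `(J_{ij})_{i≤j}` are independent centered Gaussians with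
`Var(J_{ij}) = 1` for `i < j` and `Var(J_{ii}) = 2`.) -/
def goeMeasure (N : ℕ) : Measure ((Fin N × Fin N) → ℝ) :=
  Measure.pi fun p => gaussianReal 0 (if p.1 = p.2 then 2 else 1)

/-- The symmetric (GOE) matrix built from the sample `ω`. -/
def Jmat {N : ℕ} (ω : (Fin N × Fin N) → ℝ) (i j : Fin N) : ℝ :=
  if i ≤ j then ω (i, j) else ω (j, i)

/-- The value `±1` of a Boolean spin. -/
def spin (b : Bool) : ℝ := if b then 1 else -1

/-- The configuration space `S_N(α) = {σ ∈ {−1,1}^N : ∑ᵢ σᵢ = N(2α−1)}`. -/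
def SNset (N : ℕ) (α : ℚ) : Set (Fin N → Bool) :=
  {σ | ∑ i, spin (σ i) = (N : ℝ) * (2 * (α : ℝ) - 1)}

open Classical in
/-- `S_N(α)` as a finite set. -/
def SNfinset (N : ℕ) (α : ℚ) : Finset (Fin N → Bool) :=
  Finset.univ.filter fun σ => ∑ i, spin (σ i) = (N : ℝ) * (2 * (α : ℝ) - 1)

/-- `H_0(σ) = N^{-1/2} ∑_{i,j} J_{ij} σ_i σ_j`. -/
def H0 {N : ℕ} (ω : (Fin N × Fin N) → ℝ) (σ : Fin N → Bool) : ℝ :=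
  (Real.sqrt N)⁻¹ * ∑ i, ∑ j, Jmat ω i j * spin (σ i) * spin (σ j)

/-- `g_i = N^{-1/2} ∑_j J_{ij}`. -/
def gvec {N : ℕ} (ω : (Fin N × Fin N) → ℝ) (i : Fin N) : ℝ :=
  (Real.sqrt N)⁻¹ * ∑ j, Jmat ω i j

/-- `H_1(σ) = H_0(σ) − 2(2α−1) ∑ᵢ gᵢ σᵢ + (2α−1)² N^{-1/2} ∑_{i,j} J_{ij}`. -/
def H1 {N : ℕ} (α : ℚ) (ω : (Fin N × Fin N) → ℝ) (σ : Fin N → Bool) : ℝ :=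
  H0 ω σ - 2 * (2 * (α : ℝ) - 1) * ∑ i, gvec ω i * spin (σ i)
    + (2 * (α : ℝ) - 1) ^ 2 * ((Real.sqrt N)⁻¹ * ∑ i, ∑ j, Jmat ω i j)

/-- `E[max_{σ ∈ S_N(α)} H(σ)]`, the expectation over the GOE matrix of the maximum of a
Hamiltonian `H` over the configuration space `S_N(α)`. -/
def Emax (N : ℕ) (α : ℚ) (H : ((Fin N × Fin N) → ℝ) → (Fin N → Bool) → ℝ) : ℝ :=
  ∫ ω, sSup ((H ω) '' SNset N α) ∂(goeMeasure N)

end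

/-!
A cut of `K_N` with sides `k` and `N - k` always has `k (N - k)` edges. Centering the edge
indicators of `G(N, d/N)` therefore shifts every cut by the same amount, and both sides of the
theorem become `N⁻¹ E max_A ∑_{e ∈ A} y_e`, where `A` ranges over these cuts and the `y_e` are
i.i.d. with mean `0` and variance close to `1 / N`: Gaussian on the GOE side and rescaled centered
Bernoulli on the graph side. Replacing the maximum by a log-sum-exp at inverse temperature `β` costs
`log 2 / β`, and Lindeberg's replacement argument then bounds the difference of the two sides by
`β d / N + β² O(1 / √N + 1 / √d) + log 2 / β`.

For fixed `d` the graph side converges as `N → ∞` because `E[MCUT]` is superadditive up to a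
constant. To see this, interpolate linearly between the edge probabilities of a disjoint union of
two sparse graphs and those of the whole graph. The derivative is controlled by the edges which are
pivotal for the maximum cut. These are the pairs of vertices in different classes of an equivalence
relation, so the main term is a quadratic form with a sign. The comparison bound then makes the GOE
side Cauchy in `N`, and identifies its limit with the limit in `d` of the graph side.
-/

section BernoulliProduct

open Function

variable {E : Type*}

/-- The mass that the Bernoulli law of parameter `p` gives to the bit `b`. -/
def bernoulliWeight (p : ℝ) (b : Bool) : ℝ := if b then p else 1 - p

lemma bernoulliWeight_nonneg {p : ℝ} (hp : p ∈ Set.Icc (0 : ℝ) 1) (b : Bool) :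
    0 ≤ bernoulliWeight p b := by
  unfold bernoulliWeight
  split_ifs
  exacts [hp.1, sub_nonneg.2 hp.2]

lemma sum_bernoulliWeight (p : ℝ) : ∑ b, bernoulliWeight p b = 1 := by
  simp [bernoulliWeight]

lemma hasDerivAt_bernoulliWeight {p : ℝ → ℝ} {p' t : ℝ} (h : HasDerivAt p p' t) (b : Bool) :
    HasDerivAt (fun t => bernoulliWeight (p t) b) (if b then p' else -p') t := by
  cases b
  · simpa [bernoulliWeight] using h.const_sub 1
  · simpa [bernoulliWeight] using h

variable [Fintype E] [DecidableEq E]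

/-- The expectation of `f` under independent Bernoulli bits, the bit indexed by `e` having
parameter `p e`. It is a polynomial in the parameters, which need not lie in `[0, 1]`. -/
def bernoulliExp (p : E → ℝ) (f : (E → Bool) → ℝ) : ℝ :=
  ∑ x : E → Bool, (∏ e, bernoulliWeight (p e) (x e)) * f x

lemma bernoulliExp_mono {p : E → ℝ} (hp : ∀ e, p e ∈ Set.Icc (0 : ℝ) 1) {f g : (E → Bool) → ℝ}
    (h : ∀ x, f x ≤ g x) : bernoulliExp p f ≤ bernoulliExp p g :=
  sum_le_sum fun x _ => mul_le_mul_of_nonneg_left (h x) <|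
    prod_nonneg fun e _ => bernoulliWeight_nonneg (hp e) (x e)

lemma bernoulliExp_add (p : E → ℝ) (f g : (E → Bool) → ℝ) :
    bernoulliExp p (fun x => f x + g x) = bernoulliExp p f + bernoulliExp p g := by
  simp only [bernoulliExp, mul_add, sum_add_distrib]

lemma bernoulliExp_sum_mul {ι : Type*} (s : Finset ι) (p : E → ℝ) (c : ι → ℝ)
    (f : ι → (E → Bool) → ℝ) :
    bernoulliExp p (fun x => ∑ i ∈ s, c i * f i x) = ∑ i ∈ s, c i * bernoulliExp p (f i) := by
  simp only [bernoulliExp, mul_sum]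
  rw [sum_comm]
  exact sum_congr rfl fun _ _ => sum_congr rfl fun _ _ => mul_left_comm _ _ _

/-- If the fibres of `π` are boxes, then the law of `π` is an explicit product. -/
lemma bernoulliExp_comp_of_fiber_eq_box {Y : Type*} [Fintype Y] (p : E → ℝ) (π : (E → Bool) → Y)
    (B : Y → E → Finset Bool) (hB : ∀ x y, π x = y ↔ ∀ e, x e ∈ B y e) (f : Y → ℝ) :
    bernoulliExp p (fun x => f (π x)) =
      ∑ y, (∏ e, ∑ b ∈ B y e, bernoulliWeight (p e) b) * f y := by
  classical
  rw [bernoulliExp, ← sum_fiberwise univ π]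
  refine sum_congr rfl fun y _ => ?_
  have hfiber : ({x | π x = y} : Finset (E → Bool)) = Fintype.piFinset (B y) := by
    ext x
    simp only [mem_filter, mem_univ, true_and, Fintype.mem_piFinset, hB]
  rw [prod_univ_sum, sum_mul, ← hfiber]
  exact sum_congr rfl fun x hx => by rw [(mem_filter.1 hx).2]

lemma bernoulliExp_comp_injective {E' : Type*} [Fintype E'] [DecidableEq E'] {ι : E' → E}
    (hι : Injective ι) (p : E → ℝ) (f : (E' → Bool) → ℝ) :
    bernoulliExp p (fun x => f (x ∘ ι)) = bernoulliExp (p ∘ ι) f := by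
  rw [bernoulliExp_comp_of_fiber_eq_box p (· ∘ ι) (fun y e => {b | ∀ i, ι i = e → b = y i})]
  · refine sum_congr rfl fun y _ => ?_
    congr 1
    refine (Fintype.prod_of_injective ι hι _ _ (fun e he => ?_) fun i => ?_).symm
    · rw [filter_true_of_mem fun b _ i hi => absurd ⟨i, hi⟩ he, sum_bernoulliWeight]
    · simp [hι.eq_iff, filter_eq']
  · simp only [funext_iff, mem_filter, mem_univ, true_and, comp_apply]
    exact fun x y => ⟨fun h e i hi => hi ▸ h i, fun h i => h _ i rfl⟩

lemma bernoulliExp_bit (p : E → ℝ) (e : E) :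
    bernoulliExp p (fun x => if x e then 1 else 0) = p e := by
  rw [bernoulliExp_comp_of_fiber_eq_box p (fun x => x e) (fun b e' => if e' = e then {b} else univ)
    (fun x b => ?_) fun b => if b then 1 else 0]
  · have hfactor (e' : E) : ∑ b ∈ if e' = e then {true} else univ, bernoulliWeight (p e') b =
        if e' = e then p e' else 1 := by
      split_ifs
      exacts [sum_singleton _ _, sum_bernoulliWeight _]
    simp only [Fintype.sum_bool, hfactor, prod_ite_eq', mem_univ, if_true, Bool.false_eq_true,
      if_false, mul_one, mul_zero, add_zero]
  · refine ⟨fun h e' => ?_, fun h => by simpa using h e⟩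
    split_ifs with he <;> simp [he, h]

lemma bernoulliExp_one (p : E → ℝ) : bernoulliExp p (fun _ => 1) = 1 := by
  rw [bernoulliExp_comp_of_fiber_eq_box p (fun _ => ()) (fun _ _ => univ) (by simp) fun _ => 1]
  simp only [sum_bernoulliWeight, prod_const_one, one_mul, univ_unique, sum_singleton]

lemma sum_eq_sum_of_forall_update {G H : (E → Bool) → ℝ} (e : E)
    (h : ∀ x, G (update x e true) + G (update x e false) =
      H (update x e true) + H (update x e false)) : ∑ x, G x = ∑ x, H x := by
  have hflip : Involutive fun x : E → Bool => update x e (!x e) := fun x => by simp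
  have hdouble (F : (E → Bool) → ℝ) :
      (∑ x, F x) + ∑ x, F x = ∑ x, (F (update x e true) + F (update x e false)) := by
    nth_rewrite 2 [← Equiv.sum_comp hflip.toPerm F]
    rw [← sum_add_distrib]
    refine sum_congr rfl fun x _ => ?_
    have hx := update_eq_self e x
    cases hxe : x e <;> rw [hxe] at hx <;> simp [hxe, hx, add_comm]
  linarith [hdouble G, hdouble H, sum_congr rfl fun x (_ : x ∈ univ) => h x]

lemma prod_bernoulliWeight_update (p : E → ℝ) (x : E → Bool) (e : E) (b : Bool) :
    ∏ i, bernoulliWeight (p i) (update x e b i) =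
      bernoulliWeight (p e) b * ∏ i ∈ univ.erase e, bernoulliWeight (p i) (x i) := by
  rw [← mul_prod_erase univ _ (mem_univ e), update_self]
  congr 1
  exact prod_congr rfl fun i hi => by rw [update_of_ne (ne_of_mem_erase hi)]

/-- The Margulis–Russo formula. -/
lemma hasDerivAt_bernoulliExp {p : ℝ → E → ℝ} {p' : E → ℝ} {t : ℝ}
    (hp : ∀ e, HasDerivAt (fun t => p t e) (p' e) t) (f : (E → Bool) → ℝ) :
    HasDerivAt (fun t => bernoulliExp (p t) f)
      (∑ e, p' e * bernoulliExp (p t) fun x => f (update x e true) - f (update x e false)) t := by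
  have hprod : HasDerivAt (fun t => bernoulliExp (p t) f)
      (∑ x : E → Bool, (∑ e, (∏ i ∈ univ.erase e, bernoulliWeight (p t i) (x i)) •
        if x e then p' e else -p' e) * f x) t :=
    HasDerivAt.fun_sum fun x _ => HasDerivAt.mul_const
      (HasDerivAt.fun_finsetProd fun e _ => hasDerivAt_bernoulliWeight (hp e) (x e)) (f x)
  convert hprod using 1
  simp only [sum_mul]
  rw [sum_comm]
  refine sum_congr rfl fun e _ => ?_
  rw [bernoulliExp, mul_sum]
  have hother (x : E → Bool) (b : Bool) :
      ∏ i ∈ univ.erase e, bernoulliWeight (p t i) (update x e b i) =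
        ∏ i ∈ univ.erase e, bernoulliWeight (p t i) (x i) :=
    prod_congr rfl fun i hi => by rw [update_of_ne (ne_of_mem_erase hi)]
  refine sum_eq_sum_of_forall_update e fun x => ?_
  simp only [prod_bernoulliWeight_update, hother, update_self, update_idem, smul_eq_mul]
  simp only [bernoulliWeight, if_true, Bool.false_eq_true, if_false]
  ring

end BernoulliProduct

section MaxCount

open Function

variable {E T : Type*} [Fintype T]

/-- The largest number of `true` bits of `x` inside a member of the family `A`. -/
def maxCount (A : T → Finset E) (x : E → Bool) : ℕ := univ.sup fun s => #{e ∈ A s | x e}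

lemma card_filter_le_maxCount (A : T → Finset E) (x : E → Bool) (s : T) :
    #{e ∈ A s | x e} ≤ maxCount A x :=
  le_sup (f := fun s => #{e ∈ A s | x e}) (mem_univ s)

lemma exists_card_filter_eq_maxCount [Nonempty T] (A : T → Finset E) (x : E → Bool) :
    ∃ s, #{e ∈ A s | x e} = maxCount A x :=
  let ⟨s, _, hs⟩ := exists_mem_eq_sup univ univ_nonempty fun s => #{e ∈ A s | x e}
  ⟨s, hs.symm⟩

/-- The index `e` is pivotal for `x` if it lies in some member of `A` at which `maxCount` is
attained. -/
def IsPivotal (A : T → Finset E) (x : E → Bool) (e : E) : Prop :=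
  ∃ s, #{i ∈ A s | x i} = maxCount A x ∧ e ∈ A s

variable [DecidableEq E] (A : T → Finset E) (x : E → Bool) (e : E)

instance : DecidablePred (IsPivotal A x) := fun e =>
  inferInstanceAs (Decidable (∃ s, #{i ∈ A s | x i} = maxCount A x ∧ e ∈ A s))

lemma card_filter_update_true (s : Finset E) :
    #{i ∈ s | update x e true i} = #{i ∈ s | update x e false i} + if e ∈ s then 1 else 0 := by
  simp only [card_filter, ← sum_ite_eq' s e fun _ => 1, ← sum_add_distrib]
  refine sum_congr rfl fun i _ => ?_
  rcases eq_or_ne i e with rfl | hi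
  · simp
  · simp [hi]

lemma maxCount_update_false_le :
    maxCount A (update x e false) ≤ maxCount A (update x e true) :=
  sup_mono_fun fun s _ => by rw [card_filter_update_true]; exact Nat.le_add_right _ _

lemma maxCount_update_true_le :
    maxCount A (update x e true) ≤ maxCount A (update x e false) + 1 := by
  refine Finset.sup_le fun s _ => ?_
  have hs := card_filter_le_maxCount A (update x e false) s
  rw [card_filter_update_true]
  split_ifs <;> omega

variable {x e} in
lemma maxCount_update_true_of_false (hx : x e = false) :
    maxCount A (update x e true) = maxCount A x + if IsPivotal A x e then 1 else 0 := by
  have hupdate : update x e false = x := by rw [← hx, update_eq_self]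
  have hcount (s : T) := card_filter_update_true x e (A s)
  have hle := maxCount_update_false_le A x e
  simp only [hupdate] at hcount hle
  refine le_antisymm (Finset.sup_le fun s _ => ?_) ?_
  · have hs := card_filter_le_maxCount A x s
    by_cases hattain : #{i ∈ A s | x i} = maxCount A x ∧ e ∈ A s
    · rw [hcount, if_pos hattain.2, if_pos ⟨s, hattain⟩, hattain.1]
    · rw [hcount]
      split_ifs <;> grind
  · split_ifs with hpiv
    · obtain ⟨s, hs, hes⟩ := hpiv
      have := card_filter_le_maxCount A (update x e true) s
      rwa [hcount, hs, if_pos hes] at this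
    · exact hle

lemma abs_maxCount_update_sub_pivotal_le :
    |(maxCount A (update x e true) - maxCount A (update x e false) : ℝ) -
      if IsPivotal A x e then 1 else 0| ≤ if x e then 1 else 0 := by
  have hlower : (maxCount A (update x e false) : ℝ) ≤ maxCount A (update x e true) :=
    mod_cast maxCount_update_false_le A x e
  have hupper : (maxCount A (update x e true) : ℝ) ≤ maxCount A (update x e false) + 1 :=
    mod_cast maxCount_update_true_le A x e
  cases hx : x e
  · rw [maxCount_update_true_of_false A hx, ← hx, update_eq_self, hx]
    push_cast
    simp
  · rw [if_pos rfl, abs_le]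
    split_ifs <;> constructor <;> linarith

variable [Fintype E] {A}

/-- Replacing the increments of `maxCount A` by pivotality indicators costs at most the expected
number of `true` bits, by `abs_maxCount_update_sub_pivotal_le`. -/
lemma neg_sum_le_sum_mul_bernoulliExp_maxCount_update {q : E → ℝ}
    (hq : ∀ e, q e ∈ Set.Icc (0 : ℝ) 1) {c : E → ℝ}
    (hpivotal : ∀ x, 0 ≤ ∑ e, c e * if IsPivotal A x e then 1 else 0) :
    -∑ e, |c e| * q e ≤ ∑ e, c e * bernoulliExp q fun x =>
      (maxCount A (update x e true) - maxCount A (update x e false) : ℝ) := by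
  calc -∑ e, |c e| * q e
      = bernoulliExp q fun x => ∑ e, -|c e| * if x e then 1 else 0 := by
        rw [bernoulliExp_sum_mul]
        simp only [bernoulliExp_bit, neg_mul, sum_neg_distrib]
    _ ≤ bernoulliExp q fun x => ∑ e, c e *
          (maxCount A (update x e true) - maxCount A (update x e false)) := by
        refine bernoulliExp_mono hq fun x => ?_
        rw [← sub_nonneg, ← sum_sub_distrib]
        refine (hpivotal x).trans (sum_le_sum fun e _ => ?_)
        have hclose := (abs_le.1 ((abs_mul _ _).trans_le <| mul_le_mul_of_nonneg_left
          (abs_maxCount_update_sub_pivotal_le A x e) (abs_nonneg (c e)))).1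
        linarith
    _ = _ := bernoulliExp_sum_mul _ _ _ _

lemma bernoulliExp_maxCount_sub_le {p u : E → ℝ} (hp : ∀ e, p e ∈ Set.Icc (0 : ℝ) 1)
    (hu : ∀ e, u e ∈ Set.Icc (0 : ℝ) 1)
    (hpivotal : ∀ x, 0 ≤ ∑ e, (p e - u e) * if IsPivotal A x e then 1 else 0) :
    bernoulliExp u (fun x => (maxCount A x : ℝ)) - ∑ e, (p e ^ 2 + u e ^ 2) ≤
      bernoulliExp p fun x => (maxCount A x : ℝ) := by
  let q : ℝ → E → ℝ := fun t e => u e + t * (p e - u e)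
  let φ : ℝ → ℝ := fun t => bernoulliExp (q t) fun x => (maxCount A x : ℝ)
  have hderiv (t : ℝ) := hasDerivAt_bernoulliExp (p := q) (p' := fun e => p e - u e) (t := t)
    (fun e => by simpa [q] using ((hasDerivAt_id t).mul_const (p e - u e)).const_add (u e))
    fun x => (maxCount A x : ℝ)
  have hdiff : Differentiable ℝ φ := fun t => (hderiv t).differentiableAt
  have hderiv_ge (t : ℝ) (ht : t ∈ Set.Icc (0 : ℝ) 1) :
      -∑ e, (p e ^ 2 + u e ^ 2) ≤ deriv φ t := by
    have hq (e : E) : q t e ∈ Set.Icc (0 : ℝ) 1 :=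
      (convex_Icc (0 : ℝ) 1).add_smul_sub_mem (hu e) (hp e) ht
    refine le_trans (neg_le_neg (sum_le_sum fun e _ => ?_)) <|
      (neg_sum_le_sum_mul_bernoulliExp_maxCount_update hq hpivotal).trans_eq (hderiv t).deriv.symm
    have hqe : q t e ≤ p e + u e := by
      linear_combination mul_nonneg ht.1 (hu e).1 + mul_nonneg (sub_nonneg.2 ht.2) (hp e).1
    calc |p e - u e| * q t e ≤ |p e - u e| * (p e + u e) := by gcongr
      _ ≤ p e ^ 2 + u e ^ 2 := by
        rcases abs_cases (p e - u e) with ⟨h, _⟩ | ⟨h, _⟩ <;> rw [h] <;>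
          nlinarith [sq_nonneg (p e), sq_nonneg (u e)]
  have hmvt := (convex_Icc (0 : ℝ) 1).mul_sub_le_image_sub_of_le_deriv hdiff.continuous.continuousOn
    hdiff.differentiableOn (fun t ht => hderiv_ge t (interior_subset ht))
    0 (by simp) 1 (by simp) zero_le_one
  simp only [φ, q, sub_zero, mul_one, one_mul, zero_mul, add_zero, add_sub_cancel] at hmvt
  linarith

end MaxCount

section PairSums

variable {V : Type*} [Fintype V]

lemma sum_sum_sym2_mk_eq_two_mul_sum {F : Sym2 V → ℝ} (hF : ∀ a, F s(a, a) = 0) :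
    ∑ a, ∑ b, F s(a, b) = 2 * ∑ e, F e := by
  classical
  rw [← Fintype.sum_prod_type', ← sum_fiberwise univ fun p : V × V => s(p.1, p.2), mul_sum]
  refine sum_congr rfl fun e _ => ?_
  rw [sum_congr rfl fun p hp => congrArg F (mem_filter.1 hp).2, sum_const, nsmul_eq_mul]
  induction e with | _ a b
  rcases eq_or_ne a b with rfl | hab
  · simp [hF]
  · have hfiber : ({p | s(p.1, p.2) = s(a, b)} : Finset (V × V)) = {(a, b), (b, a)} := by
      ext ⟨c, d⟩
      simp
    rw [hfiber, card_pair (by simp [hab])]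
    norm_cast

lemma sum_sum_ite_eq_mul_nonneg {Y : Type*} [DecidableEq Y] (φ : V → Y) (w : V → ℝ) :
    0 ≤ ∑ a, ∑ b, if φ a = φ b then w a * w b else 0 := by
  have hsq : ∑ a, ∑ b, (if φ a = φ b then w a * w b else 0) =
      ∑ y ∈ univ.image φ, (∑ a with φ a = y, w a) ^ 2 := by
    rw [← sum_fiberwise_of_maps_to (g := φ) fun a _ => mem_image_of_mem φ (mem_univ a)]
    refine sum_congr rfl fun y _ => ?_
    rw [sq, sum_mul_sum]
    refine sum_congr rfl fun a ha => ?_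
    simp only [(mem_filter.1 ha).2, sum_filter, eq_comm]
  rw [hsq]
  positivity

lemma sum_sum_ite_ne_mul_nonpos {Y : Type*} [DecidableEq Y] (φ : V → Y) {w : V → ℝ}
    (hw : ∑ a, w a = 0) : ∑ a, ∑ b, (if φ a ≠ φ b then w a * w b else 0) ≤ 0 := by
  have htotal : (∑ a, ∑ b, if φ a ≠ φ b then w a * w b else 0) +
      ∑ a, ∑ b, (if φ a = φ b then w a * w b else 0) = (∑ a, w a) * ∑ b, w b := by
    simp only [← sum_add_distrib, sum_mul_sum]
    refine sum_congr rfl fun a _ => sum_congr rfl fun b _ => ?_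
    by_cases h : φ a = φ b <;> simp [h]
  rw [hw, zero_mul] at htotal
  linarith [sum_sum_ite_eq_mul_nonneg φ w]

end PairSums

section Cuts

variable {V : Type*} [Fintype V] [DecidableEq V]

/-- The potential edges having exactly one endpoint in `s`. -/
def cutSet (s : Finset V) : Finset (Sym2 V) := (s ×ˢ sᶜ).image fun p => s(p.1, p.2)

@[simp]
lemma mk_mem_cutSet {s : Finset V} {a b : V} : s(a, b) ∈ cutSet s ↔ ¬(a ∈ s ↔ b ∈ s) := by
  simp only [cutSet, mem_image, mem_product, mem_compl, Prod.exists, Sym2.eq_iff]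
  grind

lemma sum_cutSet (s : Finset V) {M : Type*} [AddCommMonoid M] (y : Sym2 V → M) :
    ∑ e ∈ cutSet s, y e = ∑ a ∈ s, ∑ b ∈ sᶜ, y s(a, b) := by
  rw [cutSet, sum_image, sum_product]
  simp only [Set.InjOn, coe_product, Set.mem_prod, mem_coe, mem_compl, Sym2.eq_iff, Prod.forall,
    Prod.mk.injEq]
  grind

lemma card_cutSet (s : Finset V) : #(cutSet s) = #s * (Fintype.card V - #s) := by
  rw [card_eq_sum_ones, sum_cutSet, sum_const, sum_const, smul_eq_mul, smul_eq_mul, mul_one,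
    card_compl]

variable (V) in
/-- The cuts of `V` whose first side has `k` vertices. -/
def cutFamily (k : ℕ) (s : {s : Finset V // #s = k}) : Finset (Sym2 V) := cutSet s.1

lemma exists_forall_isPivotal_cutFamily_iff_ne (k : ℕ) (x : Sym2 V → Bool) :
    ∃ φ : V → Set {s : Finset V // #s = k},
      ∀ a b, IsPivotal (cutFamily V k) x s(a, b) ↔ φ a ≠ φ b := by
  refine ⟨fun a => {s | #{e ∈ cutSet s.1 | x e} = maxCount (cutFamily V k) x ∧ a ∈ s.1},
    fun a b => ?_⟩
  simp only [IsPivotal, cutFamily, mk_mem_cutSet, Ne, Set.ext_iff, Set.mem_ofPred_eq, not_forall]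
  exact exists_congr fun s => by tauto

lemma sum_mul_isPivotal_cutFamily_nonneg {k : ℕ} (x : Sym2 V → Bool) {w : V → ℝ}
    (hw : ∑ a, w a = 0) {c : Sym2 V → ℝ} (hc : ∀ a b, -(w a * w b) ≤ c s(a, b)) :
    0 ≤ ∑ e, c e * if IsPivotal (cutFamily V k) x e then 1 else 0 := by
  classical
  obtain ⟨φ, hφ⟩ := exists_forall_isPivotal_cutFamily_iff_ne k x
  rw [← mul_nonneg_iff_of_pos_left two_pos, ← sum_sum_sym2_mk_eq_two_mul_sum fun a => by
    rw [if_neg (by simp [hφ]), mul_zero]]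
  simp only [hφ]
  refine (neg_nonneg.2 (sum_sum_ite_ne_mul_nonpos φ hw)).trans ?_
  simp only [← sum_neg_distrib]
  refine sum_le_sum fun a _ => sum_le_sum fun b _ => ?_
  split_ifs with hab
  · simpa using hc a b
  · simp

end Cuts

section SparseCuts

/-- The edge probability `d / n` of a sparse random graph on `n` vertices, truncated at `1`. -/
noncomputable def edgeProb (d : ℝ) (n : ℕ) : ℝ := min 1 (d / n)

lemma edgeProb_mem_Icc {d : ℝ} (hd : 0 ≤ d) (n : ℕ) : edgeProb d n ∈ Set.Icc (0 : ℝ) 1 :=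
  ⟨le_min zero_le_one (by positivity), min_le_left _ _⟩

lemma edgeProb_eq_div {d : ℝ} {n : ℕ} (hdn : d ≤ n) : edgeProb d n = d / n :=
  min_eq_right (div_le_one_of_le₀ hdn n.cast_nonneg)

lemma mul_edgeProb_le {d : ℝ} (hd : 0 ≤ d) (n : ℕ) : n * edgeProb d n ≤ d := by
  rcases n.eq_zero_or_pos with rfl | hn
  · simpa using hd
  · rw [← le_div_iff₀' (mod_cast hn)]
    exact min_le_right _ _

lemma choose_two_succ_le_sq (n : ℕ) : (n + 1).choose 2 ≤ n ^ 2 := by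
  rw [Nat.choose_two_right, add_tsub_cancel_right]
  exact Nat.div_le_of_le_mul (by nlinarith [Nat.le_self_pow two_ne_zero n])

lemma choose_mul_edgeProb_sq_le {d : ℝ} (hd : 0 ≤ d) (n : ℕ) :
    ((n + 1).choose 2 : ℝ) * edgeProb d n ^ 2 ≤ d ^ 2 := by
  calc ((n + 1).choose 2 : ℝ) * edgeProb d n ^ 2 ≤ n ^ 2 * edgeProb d n ^ 2 := by
        gcongr
        exact mod_cast choose_two_succ_le_sq n
    _ = (n * edgeProb d n) ^ 2 := by ring
    _ ≤ d ^ 2 := by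
      have := (edgeProb_mem_Icc hd n).1
      have := mul_edgeProb_le hd n
      gcongr

variable {V : Type*} [Fintype V] [DecidableEq V]

/-- The edge probabilities of two disjoint sparse random graphs, on `B` and on its complement. -/
noncomputable def blockEdgeProb (d : ℝ) (B : Finset V) (e : Sym2 V) : ℝ :=
  if e ∈ B.sym2 then edgeProb d #B else if e ∈ Bᶜ.sym2 then edgeProb d #Bᶜ else 0

lemma blockEdgeProb_mem_Icc {d : ℝ} (hd : 0 ≤ d) (B : Finset V) (e : Sym2 V) :
    blockEdgeProb d B e ∈ Set.Icc (0 : ℝ) 1 := by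
  unfold blockEdgeProb
  split_ifs
  exacts [edgeProb_mem_Icc hd _, edgeProb_mem_Icc hd _, ⟨le_rfl, zero_le_one⟩]

lemma sum_blockEdgeProb_sq_le {d : ℝ} (hd : 0 ≤ d) (B : Finset V) :
    ∑ e, blockEdgeProb d B e ^ 2 ≤ 2 * d ^ 2 := by
  calc ∑ e, blockEdgeProb d B e ^ 2
      ≤ ∑ e, ((if e ∈ B.sym2 then edgeProb d #B ^ 2 else 0) +
          if e ∈ Bᶜ.sym2 then edgeProb d #Bᶜ ^ 2 else 0) := by
        refine sum_le_sum fun e _ => ?_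
        unfold blockEdgeProb
        split_ifs <;> simp [sq_nonneg]
    _ ≤ d ^ 2 + d ^ 2 := by
        rw [sum_add_distrib]
        refine add_le_add ?_ ?_ <;>
          rw [← sum_filter, filter_mem_eq_inter, univ_inter, sum_const, card_sym2, nsmul_eq_mul] <;>
          exact choose_mul_edgeProb_sq_le hd _
    _ = 2 * d ^ 2 := (two_mul _).symm

/-- The weights `w` are proportional to `1 / #B` on `B` and to `-1 / #Bᶜ` off `B`. -/
lemma exists_neg_mul_le_edgeProb_sub_blockEdgeProb {d : ℝ} (hd : 0 ≤ d)
    (hdV : d ≤ Fintype.card V) {B : Finset V} (hB : B.Nonempty) (hB' : Bᶜ.Nonempty) :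
    ∃ w : V → ℝ, ∑ a, w a = 0 ∧ ∀ a b,
      -(w a * w b) ≤ edgeProb d (Fintype.card V) - blockEdgeProb d B s(a, b) := by
  have hm : (0 : ℝ) < #B := mod_cast hB.card_pos
  have hn : (0 : ℝ) < #Bᶜ := mod_cast hB'.card_pos
  have hadd : (Fintype.card V : ℝ) = #B + #Bᶜ := mod_cast (card_add_card_compl B).symm
  have hpB : edgeProb d #B ≤ d / #B := min_le_right _ _
  have hpB' : edgeProb d #Bᶜ ≤ d / #Bᶜ := min_le_right _ _
  let c : ℝ := √(d * #B * #Bᶜ / Fintype.card V)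
  have hcsq : c * c = d * #B * #Bᶜ / Fintype.card V := Real.mul_self_sqrt (by positivity)
  refine ⟨fun a => c * if a ∈ B then (#B : ℝ)⁻¹ else -(#Bᶜ : ℝ)⁻¹, ?_, fun a b => ?_⟩
  · rw [← mul_sum, sum_ite, sum_const, sum_const, filter_mem_eq_inter, univ_inter,
      filter_notMem_eq_sdiff, ← compl_eq_univ_sdiff, nsmul_eq_mul, nsmul_eq_mul, mul_neg,
      mul_inv_cancel₀ hm.ne', mul_inv_cancel₀ hn.ne', add_neg_cancel, mul_zero]
  · rw [edgeProb_eq_div hdV, mul_mul_mul_comm, hcsq, hadd]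
    simp only [blockEdgeProb, mk_mem_sym2_iff, mem_compl]
    have hinside : -(d * #B * #Bᶜ / (#B + #Bᶜ) * ((#B : ℝ)⁻¹ * (#B : ℝ)⁻¹)) =
        d / (#B + #Bᶜ) - d / #B := by field
    have houtside : -(d * #B * #Bᶜ / (#B + #Bᶜ) * ((#Bᶜ : ℝ)⁻¹ * (#Bᶜ : ℝ)⁻¹)) =
        d / (#B + #Bᶜ) - d / #Bᶜ := by field
    have hmixed : d * #B * #Bᶜ / (#B + #Bᶜ) * ((#B : ℝ)⁻¹ * (#Bᶜ : ℝ)⁻¹) =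
        d / (#B + #Bᶜ) := by field
    by_cases ha : a ∈ B <;> by_cases hb : b ∈ B <;> simp [ha, hb] <;> linarith

lemma edgeProb_sub_blockEdgeProb_mul_isPivotal_nonneg {d : ℝ} (hd : 0 ≤ d) {B : Finset V}
    (hB : B.Nonempty) (hB' : Bᶜ.Nonempty) (k : ℕ) (x : Sym2 V → Bool) :
    0 ≤ ∑ e, (edgeProb d (Fintype.card V) - blockEdgeProb d B e) *
      if IsPivotal (cutFamily V k) x e then 1 else 0 := by
  rcases le_total d (Fintype.card V) with hdV | hVd
  · obtain ⟨w, hw, hle⟩ := exists_neg_mul_le_edgeProb_sub_blockEdgeProb hd hdV hB hB'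
    exact sum_mul_isPivotal_cutFamily_nonneg x hw hle
  · have hone : edgeProb d (Fintype.card V) = 1 :=
      min_eq_left ((one_le_div (mod_cast hB.card_pos.trans_le (card_le_univ B))).2 hVd)
    refine sum_nonneg fun e _ => mul_nonneg ?_ (by split_ifs <;> norm_num)
    exact hone ▸ sub_nonneg.2 (blockEdgeProb_mem_Icc hd B e).2

variable (V) in
/-- The expected size of the largest cut with a side of `k` vertices, in a sparse random graph on
`V` with edge probability `edgeProb d (Fintype.card V)`. -/
noncomputable def expMaxCut (d : ℝ) (k : ℕ) : ℝ :=
  bernoulliExp (fun _ : Sym2 V => edgeProb d (Fintype.card V)) fun x =>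
    (maxCount (cutFamily V k) x : ℝ)

lemma bernoulliExp_blockEdgeProb_le_expMaxCut {d : ℝ} (hd : 0 ≤ d) {B : Finset V}
    (hB : B.Nonempty) (hB' : Bᶜ.Nonempty) (k : ℕ) :
    bernoulliExp (blockEdgeProb d B) (fun x => (maxCount (cutFamily V k) x : ℝ)) - 3 * d ^ 2 ≤
      expMaxCut V d k := by
  refine le_trans ?_ (bernoulliExp_maxCount_sub_le (fun _ => edgeProb_mem_Icc hd _)
    (blockEdgeProb_mem_Icc hd B) (edgeProb_sub_blockEdgeProb_mul_isPivotal_nonneg hd hB hB' k))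
  have hconst := choose_mul_edgeProb_sq_le hd (Fintype.card V)
  rw [sum_add_distrib, sum_const, card_univ, Sym2.card, nsmul_eq_mul]
  linarith [sum_blockEdgeProb_sq_le hd B]

end SparseCuts

section Superadditivity

variable {V V₁ V₂ : Type*} {f₁ : V₁ ↪ V} {f₂ : V₂ ↪ V}

lemma nonempty_subtype_card_eq [Fintype V] {k : ℕ} (hk : k ≤ Fintype.card V) :
    Nonempty {s : Finset V // #s = k} :=
  let ⟨s, _, hs⟩ := exists_subset_card_eq (s := (univ : Finset V)) hk
  ⟨s, hs⟩

lemma disjoint_map_sym2Map (hf : ∀ a b, f₁ a ≠ f₂ b) (A₁ : Finset (Sym2 V₁))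
    (A₂ : Finset (Sym2 V₂)) : Disjoint (A₁.map f₁.sym2Map) (A₂.map f₂.sym2Map) := by
  simp only [disjoint_left, mem_map, not_exists, not_and, forall_exists_index, and_imp]
  rintro _ e₁ - rfl e₂ -
  induction e₁ with | _ a b
  induction e₂ with | _ c d
  rw [Function.Embedding.sym2Map_apply, Function.Embedding.sym2Map_apply, Sym2.map_mk,
    Sym2.map_mk, Sym2.eq_iff]
  rintro (⟨h, -⟩ | ⟨h, -⟩) <;> exact hf _ _ h.symm

variable [Fintype V] [DecidableEq V] [Fintype V₁] [DecidableEq V₁] [Fintype V₂] [DecidableEq V₂]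

lemma map_cutSet_union_subset (hf : ∀ a b, f₁ a ≠ f₂ b) (s₁ : Finset V₁) (s₂ : Finset V₂) :
    (cutSet s₁).map f₁.sym2Map ∪ (cutSet s₂).map f₂.sym2Map ⊆
      cutSet (s₁.map f₁ ∪ s₂.map f₂) := by
  refine union_subset ?_ ?_ <;> refine map_subset_iff_subset_preimage.2 fun e he => ?_ <;>
    induction e with | _ a b <;> simpa [hf, fun a b => (hf a b).symm] using he

lemma maxCount_cutFamily_add_le (hf : ∀ a b, f₁ a ≠ f₂ b) {k₁ k₂ : ℕ}
    (hk₁ : k₁ ≤ Fintype.card V₁) (hk₂ : k₂ ≤ Fintype.card V₂) (x : Sym2 V → Bool) :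
    maxCount (cutFamily V₁ k₁) (x ∘ Sym2.map f₁) + maxCount (cutFamily V₂ k₂) (x ∘ Sym2.map f₂) ≤
      maxCount (cutFamily V (k₁ + k₂)) x := by
  have := nonempty_subtype_card_eq hk₁
  have := nonempty_subtype_card_eq hk₂
  obtain ⟨⟨s₁, hs₁⟩, hmax₁⟩ :=
    exists_card_filter_eq_maxCount (cutFamily V₁ k₁) (x ∘ Sym2.map f₁)
  obtain ⟨⟨s₂, hs₂⟩, hmax₂⟩ :=
    exists_card_filter_eq_maxCount (cutFamily V₂ k₂) (x ∘ Sym2.map f₂)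
  have hs : #(s₁.map f₁ ∪ s₂.map f₂) = k₁ + k₂ := by
    rw [card_union_of_disjoint, card_map, card_map, hs₁, hs₂]
    simpa [disjoint_left] using fun a _ b _ => (hf a b).symm
  calc _ = #({e ∈ (cutSet s₁).map f₁.sym2Map | x e} ∪ {e ∈ (cutSet s₂).map f₂.sym2Map | x e}) := by
        rw [← hmax₁, ← hmax₂, filter_map, filter_map,
          card_union_of_disjoint (disjoint_map_sym2Map hf _ _), card_map, card_map]
        rfl
    _ ≤ #{e ∈ cutSet (s₁.map f₁ ∪ s₂.map f₂) | x e} := by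
        rw [← filter_union]
        exact card_le_card (filter_subset_filter _ (map_cutSet_union_subset hf s₁ s₂))
    _ ≤ _ := card_filter_le_maxCount (cutFamily V (k₁ + k₂)) x ⟨_, hs⟩

lemma expMaxCut_add_sub_le [Nonempty V₁] [Nonempty V₂]
    (hf : univ.map f₂ = (univ.map f₁)ᶜ) {d : ℝ} (hd : 0 ≤ d) {k₁ k₂ : ℕ}
    (hk₁ : k₁ ≤ Fintype.card V₁) (hk₂ : k₂ ≤ Fintype.card V₂) :
    expMaxCut V₁ d k₁ + expMaxCut V₂ d k₂ - 3 * d ^ 2 ≤ expMaxCut V d (k₁ + k₂) := by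
  have hne (a : V₁) (b : V₂) : f₁ a ≠ f₂ b := fun h =>
    mem_compl.1 (hf ▸ h ▸ mem_map_of_mem f₂ (mem_univ b)) (mem_map_of_mem f₁ (mem_univ a))
  have hu₁ : blockEdgeProb d (univ.map f₁) ∘ Sym2.map f₁ =
      fun _ => edgeProb d (Fintype.card V₁) := by
    ext ⟨a, b⟩
    simp [blockEdgeProb]
  have hu₂ : blockEdgeProb d (univ.map f₁) ∘ Sym2.map f₂ =
      fun _ => edgeProb d (Fintype.card V₂) := by
    ext ⟨a, b⟩
    simp [blockEdgeProb, ← hf, hne]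
  refine le_trans (sub_le_sub_right ?_ _) <| bernoulliExp_blockEdgeProb_le_expMaxCut hd
    (univ_nonempty.map (f := f₁)) (hf ▸ univ_nonempty.map) (k₁ + k₂)
  simp only [expMaxCut, ← hu₁, ← hu₂]
  rw [← bernoulliExp_comp_injective (Sym2.map.injective f₁.injective),
    ← bernoulliExp_comp_injective (Sym2.map.injective f₂.injective), ← bernoulliExp_add]
  exact bernoulliExp_mono (blockEdgeProb_mem_Icc hd _) fun x =>
    mod_cast maxCount_cutFamily_add_le hne hk₁ hk₂ x

lemma expMaxCut_fin_add_sub_le {d : ℝ} (hd : 0 ≤ d) {m n k₁ k₂ : ℕ} (hm : m ≠ 0) (hn : n ≠ 0)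
    (hk₁ : k₁ ≤ m) (hk₂ : k₂ ≤ n) :
    expMaxCut (Fin m) d k₁ + expMaxCut (Fin n) d k₂ - 3 * d ^ 2 ≤
      expMaxCut (Fin (m + n)) d (k₁ + k₂) := by
  have : NeZero m := ⟨hm⟩
  have : NeZero n := ⟨hn⟩
  refine expMaxCut_add_sub_le (f₁ := Fin.castAddEmb n) (f₂ := Fin.natAddEmb m) ?_ hd
    (by simpa using hk₁) (by simpa using hk₂)
  ext i
  refine Fin.addCases (fun i => ?_) (fun i => ?_) i <;> simp [Fin.ext_iff] <;> omega

lemma expMaxCut_le {d : ℝ} (hd : 0 ≤ d) (k : ℕ) : expMaxCut V d k ≤ d * Fintype.card V := by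
  have hp := edgeProb_mem_Icc hd (Fintype.card V)
  have hcount (x : Sym2 V → Bool) : (maxCount (cutFamily V k) x : ℝ) ≤
      ∑ e, 1 * (if x e then 1 else 0 : ℝ) := by
    simp only [one_mul]
    rw [sum_boole, Nat.cast_le, maxCount]
    exact Finset.sup_le fun s _ => card_le_card (filter_subset_filter _ (subset_univ _))
  calc expMaxCut V d k ≤ ∑ _e : Sym2 V, edgeProb d (Fintype.card V) := by
        refine (bernoulliExp_mono (fun _ => hp) hcount).trans_eq ?_
        rw [bernoulliExp_sum_mul]
        simp only [bernoulliExp_bit, one_mul]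
    _ ≤ Fintype.card V ^ 2 * edgeProb d (Fintype.card V) := by
        rw [sum_const, card_univ, Sym2.card, nsmul_eq_mul]
        exact mul_le_mul_of_nonneg_right (mod_cast choose_two_succ_le_sq _) hp.1
    _ = Fintype.card V * (Fintype.card V * edgeProb d (Fintype.card V)) := by ring
    _ ≤ d * Fintype.card V := by
        rw [mul_comm d]
        exact mul_le_mul_of_nonneg_left (mul_edgeProb_le hd _) (Nat.cast_nonneg _)

lemma exists_tendsto_expMaxCut_div {d : ℝ} (hd : 0 ≤ d) {P q : ℕ} (hPq : P ≤ q) (hq : 0 < q) :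
    ∃ l : ℝ, Filter.Tendsto (fun m : ℕ => expMaxCut (Fin (q * m)) d (P * m) / m) Filter.atTop
      (nhds l) := by
  let u : ℕ → ℝ := fun m => 3 * d ^ 2 - expMaxCut (Fin (q * m)) d (P * m)
  have hzero : expMaxCut (Fin (q * 0)) d (P * 0) ≤ 0 := by
    simpa using expMaxCut_le (V := Fin (q * 0)) hd (P * 0)
  have hu : Subadditive u := by
    intro m n
    rcases eq_or_ne m 0 with rfl | hm
    · simp only [u, zero_add]
      nlinarith
    rcases eq_or_ne n 0 with rfl | hn
    · simp only [u, add_zero]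
      nlinarith
    have := expMaxCut_fin_add_sub_le hd (mul_ne_zero hq.ne' hm) (mul_ne_zero hq.ne' hn)
      (Nat.mul_le_mul_right m hPq) (Nat.mul_le_mul_right n hPq)
    rw [← mul_add, ← mul_add] at this
    simp only [u]
    linarith
  have hbdd : BddBelow (Set.range fun n => u n / n) := by
    refine ⟨-(d * q), Set.forall_mem_range.2 fun n => ?_⟩
    rcases n.eq_zero_or_pos with rfl | hn
    · simpa using by positivity
    · rw [le_div_iff₀ (mod_cast hn)]
      have := expMaxCut_le (V := Fin (q * n)) hd (P * n)
      simp only [Fintype.card_fin, Nat.cast_mul] at this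
      simp only [u]
      nlinarith [sq_nonneg d]
  refine ⟨0 - hu.lim, ((tendsto_const_div_atTop_nhds_zero_nat (3 * d ^ 2)).sub
    (hu.tendsto_lim hbdd)).congr fun m => ?_⟩
  simp only [u]
  ring

end Superadditivity

section ErdosRenyi

variable {N : ℕ}

/-- The simple graph whose edges are the non-loops `e` with `x e = true`. -/
def bitGraph (x : Sym2 (Fin N) → Bool) : SimpleGraph (Fin N) :=
  SimpleGraph.fromEdgeSet {e | x e}

lemma bitGraph_eq_iff {x : Sym2 (Fin N) → Bool} {G : SimpleGraph (Fin N)} :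
    bitGraph x = G ↔ ∀ e, ¬e.IsDiag → (x e ↔ e ∈ G.edgeSet) := by
  rw [← SimpleGraph.edgeSet_inj, bitGraph, SimpleGraph.edgeSet_fromEdgeSet, Set.ext_iff]
  refine forall_congr' fun e => ?_
  have := G.not_isDiag_of_mem_edgeSet (e := e)
  simp only [Set.mem_sdiff, Set.mem_ofPred_eq, Sym2.mem_diagSet]
  tauto

lemma prod_ite_isDiag_ite_mem_edgeSet (p : ℝ) (G : SimpleGraph (Fin N))
    [DecidablePred (· ∈ G.edgeSet)] :
    ∏ e : Sym2 (Fin N), (if e.IsDiag then 1 else if e ∈ G.edgeSet then p else 1 - p) =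
      p ^ numEdges G * (1 - p) ^ (N.choose 2 - numEdges G) := by
  have hedges : #{e ∈ ({e | ¬e.IsDiag} : Finset (Sym2 (Fin N))) | e ∈ G.edgeSet} = numEdges G := by
    rw [numEdges, Nat.card_eq_fintype_card, ← Set.toFinset_card]
    congr 1
    ext e
    simpa using G.not_isDiag_of_mem_edgeSet
  have hloopless : #{e : Sym2 (Fin N) | ¬e.IsDiag} = N.choose 2 := by
    rw [← Fintype.card_subtype, Sym2.card_subtype_not_diag, Fintype.card_fin]
  have hnonedges : #{e ∈ ({e | ¬e.IsDiag} : Finset (Sym2 (Fin N))) | e ∉ G.edgeSet} =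
      N.choose 2 - numEdges G := by
    rw [← hedges, ← hloopless, ← card_filter_add_card_filter_not (fun e => e ∈ G.edgeSet)
      (s := {e | ¬e.IsDiag}), add_tsub_cancel_left]
  rw [prod_ite, prod_const_one, one_mul, prod_ite, prod_const, prod_const, hedges, hnonedges]

lemma bernoulliExp_bitGraph (p : ℝ) (f : SimpleGraph (Fin N) → ℝ) :
    bernoulliExp (fun _ => p) (fun x => f (bitGraph x)) = erExp N p f := by
  classical
  rw [bernoulliExp_comp_of_fiber_eq_box _ bitGraph
    (fun G e => if e.IsDiag then univ else {decide (e ∈ G.edgeSet)})]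
  · refine sum_congr rfl fun G _ => ?_
    rw [← prod_ite_isDiag_ite_mem_edgeSet]
    congr 1
    refine prod_congr rfl fun e _ => ?_
    split_ifs <;> simp [*, bernoulliWeight]
  · intro x G
    rw [bitGraph_eq_iff]
    refine forall_congr' fun e => ?_
    split_ifs with he
    · simp [he]
    · cases x e <;> simp [he]

lemma cutCount_bitGraph (x : Sym2 (Fin N) → Bool) (s : Finset (Fin N)) :
    cutCount (bitGraph x) s = #{e ∈ cutSet s | x e} := by
  classical
  rw [cutCount, Nat.card_eq_fintype_card, Fintype.card_subtype, card_filter, card_filter,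
    sum_cutSet, ← sum_product', ← sum_subset (subset_univ (s ×ˢ sᶜ))]
  · refine sum_congr rfl fun p hp => ?_
    have hp : p.1 ∈ s ∧ p.2 ∉ s := by simpa using hp
    have hne : p.1 ≠ p.2 := fun h => hp.2 (h ▸ hp.1)
    simp [bitGraph, hp, hne]
  · intro p _ hp
    exact if_neg fun h => hp (by simp [h])

lemma mcut_bitGraph (α : ℚ) (x : Sym2 (Fin N) → Bool) :
    mcut α (bitGraph x) = maxCount (cutFamily (Fin N) ⌊α * (N : ℚ)⌋₊) x := by
  refine le_antisymm (Finset.sup_le fun s hs => ?_) (Finset.sup_le fun s _ => ?_)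
  · rw [cutCount_bitGraph]
    exact card_filter_le_maxCount (cutFamily (Fin N) _) x ⟨s, (mem_powersetCard.1 hs).2⟩
  · rw [cutFamily, ← cutCount_bitGraph]
    exact le_sup (f := cutCount (bitGraph x)) (mem_powersetCard.2 ⟨subset_univ _, s.2⟩)

lemma erExp_mcut_eq_expMaxCut {α : ℚ} {d : ℝ} {k : ℕ} (hd : d ≤ N) (hk : α * (N : ℚ) = k) :
    erExp N (d / N) (fun G => (mcut α G : ℝ)) = expMaxCut (Fin N) d k := by
  obtain rfl : ⌊α * (N : ℚ)⌋₊ = k := by rw [hk, Nat.floor_natCast]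
  simp only [← bernoulliExp_bitGraph, mcut_bitGraph, expMaxCut, Fintype.card_fin,
    edgeProb_eq_div hd]

end ErdosRenyi

section MomentComparison

variable {K : ℝ}

lemma abs_le_mul_abs_pow_succ {g g' : ℝ → ℝ} (hg : ∀ t, HasDerivAt g (g' t) t) (h0 : g 0 = 0)
    {n : ℕ} (hbound : ∀ t, |g' t| ≤ K * |t| ^ n) (t : ℝ) : |g t| ≤ K * |t| ^ (n + 1) := by
  have hK : 0 ≤ K := by simpa using (abs_nonneg _).trans (hbound 1)
  have hle : ∀ u ∈ Set.uIcc 0 t, ‖g' u‖ ≤ K * |t| ^ n := fun u hu =>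
    (hbound u).trans (by gcongr ?_ * ?_ ^ n; simpa using Set.abs_sub_left_of_mem_uIcc hu)
  have := Convex.norm_image_sub_le_of_norm_hasDerivWithin_le (fun u _ => (hg u).hasDerivWithinAt)
    hle (convex_uIcc 0 t) Set.left_mem_uIcc Set.right_mem_uIcc
  simpa [h0, pow_succ, mul_assoc] using this

variable {g g₁ g₂ g₃ : ℝ → ℝ}

lemma abs_sub_taylor_two_le (hg : ∀ t, HasDerivAt g (g₁ t) t) (hg₁ : ∀ t, HasDerivAt g₁ (g₂ t) t)
    (hg₂ : ∀ t, HasDerivAt g₂ (g₃ t) t) (hg₃ : ∀ t, |g₃ t| ≤ K) (t : ℝ) :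
    |g t - (g 0 + g₁ 0 * t + g₂ 0 / 2 * t ^ 2)| ≤ K * |t| ^ 3 := by
  have hrem₂ : ∀ t, |g₂ t - g₂ 0| ≤ K * |t| ^ 1 :=
    abs_le_mul_abs_pow_succ (fun t => (hg₂ t).sub_const _) (sub_self _) (by simpa using hg₃)
  have hrem₁ : ∀ t, |g₁ t - (g₁ 0 + g₂ 0 * t)| ≤ K * |t| ^ 2 := by
    refine abs_le_mul_abs_pow_succ (fun t => ?_) (by simp) hrem₂
    exact ((hg₁ t).sub (((hasDerivAt_id t).const_mul (g₂ 0)).const_add (g₁ 0))).congr_deriv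
      (by rw [mul_one])
  refine abs_le_mul_abs_pow_succ (g := fun t => g t - (g 0 + g₁ 0 * t + g₂ 0 / 2 * t ^ 2))
    (fun t => ?_) (by simp) hrem₁ t
  refine ((hg t).sub ((((hasDerivAt_id t).const_mul (g₁ 0)).const_add (g 0)).add
    (((hasDerivAt_id t).pow 2).const_mul (g₂ 0 / 2)))).congr_deriv ?_
  simp only [id_eq, Nat.cast_ofNat, Nat.add_one_sub_one, pow_one]
  ring

lemma abs_integral_sub_taylor_two_le (hg : ∀ t, HasDerivAt g (g₁ t) t)
    (hg₁ : ∀ t, HasDerivAt g₁ (g₂ t) t) (hg₂ : ∀ t, HasDerivAt g₂ (g₃ t) t)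
    (hg₃ : ∀ t, |g₃ t| ≤ K) {μ : Measure ℝ} [IsProbabilityMeasure μ] (hμ : MemLp id 3 μ)
    (hmean : ∫ t, t ∂μ = 0) :
    |∫ t, g t ∂μ - (g 0 + g₂ 0 / 2 * ∫ t, t ^ 2 ∂μ)| ≤ K * ∫ t, |t| ^ 3 ∂μ := by
  have hint₁ : Integrable (fun t => t) μ := hμ.integrable (by norm_num)
  have hint₂ : Integrable (fun t => t ^ 2) μ :=
    (hμ.mono_exponent (q := 3) (p := 2) (by norm_num)).integrable_sq
  have hint₃ : Integrable (fun t => |t| ^ 3) μ := hμ.integrable_norm_pow (by norm_num)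
  have htaylor := abs_sub_taylor_two_le hg hg₁ hg₂ hg₃
  have hlin : Integrable (fun t => g 0 + g₁ 0 * t) μ := (integrable_const _).add (hint₁.const_mul _)
  have hpoly : Integrable (fun t => g 0 + g₁ 0 * t + g₂ 0 / 2 * t ^ 2) μ :=
    hlin.add (hint₂.const_mul _)
  have hcont : Continuous g := continuous_iff_continuousAt.2 fun t => (hg t).continuousAt
  have hrem : Integrable (fun t => g t - (g 0 + g₁ 0 * t + g₂ 0 / 2 * t ^ 2)) μ :=
    (hint₃.const_mul K).mono' (by fun_prop) (.of_forall htaylor)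
  have hintg : Integrable g μ := (hrem.add hpoly).congr (.of_forall fun t => sub_add_cancel _ _)
  have hvalue : ∫ t, (g 0 + g₁ 0 * t + g₂ 0 / 2 * t ^ 2) ∂μ = g 0 + g₂ 0 / 2 * ∫ t, t ^ 2 ∂μ := by
    rw [integral_add hlin (hint₂.const_mul _), integral_add (integrable_const _)
      (hint₁.const_mul _), integral_const_mul, integral_const_mul, hmean]
    simp
  rw [← hvalue, ← integral_sub hintg hpoly, ← integral_const_mul, ← Real.norm_eq_abs]
  exact norm_integral_le_of_norm_le (hint₃.const_mul K) (ae_of_all _ htaylor)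

lemma abs_integral_sub_integral_le_of_moments (hg : ∀ t, HasDerivAt g (g₁ t) t)
    (hg₁ : ∀ t, HasDerivAt g₁ (g₂ t) t) (hg₂ : ∀ t, HasDerivAt g₂ (g₃ t) t)
    (hg₃ : ∀ t, |g₃ t| ≤ K) {μ ν : Measure ℝ} [IsProbabilityMeasure μ] [IsProbabilityMeasure ν]
    (hμ : MemLp id 3 μ) (hν : MemLp id 3 ν) (hmeanμ : ∫ t, t ∂μ = 0) (hmeanν : ∫ t, t ∂ν = 0) :
    |∫ t, g t ∂μ - ∫ t, g t ∂ν| ≤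
      |g₂ 0| / 2 * |∫ t, t ^ 2 ∂μ - ∫ t, t ^ 2 ∂ν| +
        K * (∫ t, |t| ^ 3 ∂μ + ∫ t, |t| ^ 3 ∂ν) := by
  have hboundμ := abs_integral_sub_taylor_two_le hg hg₁ hg₂ hg₃ hμ hmeanμ
  have hboundν := abs_integral_sub_taylor_two_le hg hg₁ hg₂ hg₃ hν hmeanν
  have hsplit : ∫ t, g t ∂μ - ∫ t, g t ∂ν =
      g₂ 0 / 2 * (∫ t, t ^ 2 ∂μ - ∫ t, t ^ 2 ∂ν) +
        (∫ t, g t ∂μ - (g 0 + g₂ 0 / 2 * ∫ t, t ^ 2 ∂μ)) -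
          (∫ t, g t ∂ν - (g 0 + g₂ 0 / 2 * ∫ t, t ^ 2 ∂ν)) := by ring
  rw [hsplit]
  refine (abs_sub _ _).trans ((add_le_add_left (abs_add_le _ _) _).trans ?_)
  rw [abs_mul, abs_div, abs_two]
  linarith

end MomentComparison

section Lindeberg

open Function

variable {ι : Type*} [Fintype ι] [DecidableEq ι] {X : ι → Type*} [∀ i, MeasurableSpace (X i)]

lemma measurePreserving_update (ρ : ∀ i, Measure (X i)) [∀ i, IsProbabilityMeasure (ρ i)] (j : ι)
    (m : Measure (X j)) [IsProbabilityMeasure m] :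
    MeasurePreserving (fun z : (∀ i, X i) × X j => update z.1 j z.2) ((Measure.pi ρ).prod m)
      (Measure.pi (update ρ j m)) := by
  have hprob (i : ι) : IsProbabilityMeasure (update ρ j m i) := by
    rcases eq_or_ne i j with rfl | hi
    · simpa
    · rw [update_of_ne hi]
      infer_instance
  have hmeas : Measurable fun z : (∀ i, X i) × X j => update z.1 j z.2 := by fun_prop
  refine ⟨hmeas, (Measure.pi_eq fun s hs => ?_).symm⟩
  have hpre : (fun z : (∀ i, X i) × X j => update z.1 j z.2) ⁻¹' Set.univ.pi s =
      Set.univ.pi (update s j Set.univ) ×ˢ s j := by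
    ext z
    simp only [Set.mem_preimage, Set.mem_univ_pi, Set.mem_prod,
      forall_update_iff s fun i t => z.1 i ∈ t, forall_update_iff z.1 fun i t => t ∈ s i,
      Set.mem_univ, true_and]
    exact and_comm
  rw [Measure.map_apply hmeas (.univ_pi hs), hpre, Measure.prod_prod, Measure.pi_pi,
    ← mul_prod_erase _ _ (mem_univ j), ← mul_prod_erase _ _ (mem_univ j), update_self, update_self,
    measure_univ, one_mul, mul_comm]
  exact congrArg _ (prod_congr rfl fun i hi => by simp [ne_of_mem_erase hi])

lemma integral_pi_update {ρ : ∀ i, Measure (X i)} [∀ i, IsProbabilityMeasure (ρ i)] {j : ι}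
    {m : Measure (X j)} [IsProbabilityMeasure m] {f : (∀ i, X i) → ℝ}
    (hf : Integrable f (Measure.pi (update ρ j m))) :
    Integrable (fun y => ∫ t, f (update y j t) ∂m) (Measure.pi ρ) ∧
      ∫ y, f y ∂Measure.pi (update ρ j m) = ∫ y, ∫ t, f (update y j t) ∂m ∂Measure.pi ρ := by
  have hmp := measurePreserving_update ρ j m
  have hint := (hmp.integrable_comp hf.1).2 hf
  refine ⟨hint.integral_prod_left, ?_⟩
  rw [← hmp.map_eq, integral_map hmp.measurable.aemeasurable (hmp.map_eq ▸ hf.1)]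
  exact integral_prod _ hint

lemma abs_integral_pi_update_sub_le {ρ : ∀ i, Measure (X i)} [∀ i, IsProbabilityMeasure (ρ i)]
    {j : ι} {m : Measure (X j)} [IsProbabilityMeasure m] {f : (∀ i, X i) → ℝ}
    (hf : Integrable f (Measure.pi ρ)) (hf' : Integrable f (Measure.pi (update ρ j m))) {δ : ℝ}
    (hδ : ∀ y, |∫ t, f (update y j t) ∂ρ j - ∫ t, f (update y j t) ∂m| ≤ δ) :
    |∫ y, f y ∂Measure.pi ρ - ∫ y, f y ∂Measure.pi (update ρ j m)| ≤ δ := by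
  obtain ⟨hint, heq⟩ := integral_pi_update (ρ := ρ) (j := j) (m := ρ j)
    (by rwa [update_eq_self])
  obtain ⟨hint', heq'⟩ := integral_pi_update hf'
  rw [update_eq_self] at heq
  rw [heq, heq', ← integral_sub hint hint', ← Real.norm_eq_abs]
  refine (norm_integral_le_of_norm_le_const (C := δ) (ae_of_all _ fun y => hδ y)).trans_eq ?_
  rw [probReal_univ, mul_one]

instance (s : Finset ι) (μ ν : ∀ i, Measure (X i)) [∀ i, IsProbabilityMeasure (μ i)]
    [∀ i, IsProbabilityMeasure (ν i)] (i : ι) : IsProbabilityMeasure (s.piecewise μ ν i) := by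
  by_cases hi : i ∈ s <;> simp only [piecewise, hi, if_true, if_false] <;> infer_instance

/-- Lindeberg's replacement argument: the coordinates are swapped one at a time. -/
lemma abs_integral_pi_sub_integral_pi_le {μ ν : ∀ i, Measure (X i)}
    [∀ i, IsProbabilityMeasure (μ i)] [∀ i, IsProbabilityMeasure (ν i)] {f : (∀ i, X i) → ℝ}
    (hf : ∀ s : Finset ι, Integrable f (Measure.pi (s.piecewise ν μ))) {δ : ι → ℝ}
    (hδ : ∀ i y, |∫ t, f (update y i t) ∂μ i - ∫ t, f (update y i t) ∂ν i| ≤ δ i) :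
    |∫ y, f y ∂Measure.pi μ - ∫ y, f y ∂Measure.pi ν| ≤ ∑ i, δ i := by
  suffices hswap : ∀ s : Finset ι,
      |∫ y, f y ∂Measure.pi μ - ∫ y, f y ∂Measure.pi (s.piecewise ν μ)| ≤ ∑ i ∈ s, δ i by
    simpa using hswap univ
  intro s
  induction s using Finset.induction_on with
  | empty => simp
  | insert j s hj ih =>
    rw [sum_insert hj, piecewise_insert, add_comm]
    refine (abs_sub_le _ _ _).trans (add_le_add ih (abs_integral_pi_update_sub_le (hf s) ?_ ?_))
    · simpa [piecewise_insert] using hf (insert j s)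
    · simpa [hj] using hδ j

end Lindeberg

section SoftMax

open Function Real

variable {E T : Type*}

/-- The largest total weight of `y` on a member of the family `A`. -/
noncomputable def maxWeight (A : T → Finset E) (y : E → ℝ) : ℝ := ⨆ s, ∑ e ∈ A s, y e

/-- The smooth approximation of `maxWeight` at inverse temperature `β`. -/
noncomputable def softMax [Fintype T] (A : T → Finset E) (β : ℝ) (y : E → ℝ) : ℝ :=
  β⁻¹ * log (∑ s, exp (β * ∑ e ∈ A s, y e))

section Finite

variable [Finite T]

lemma sum_le_maxWeight (A : T → Finset E) (y : E → ℝ) (s : T) : ∑ e ∈ A s, y e ≤ maxWeight A y :=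
  le_ciSup (f := fun s => ∑ e ∈ A s, y e) (Set.finite_range _).bddAbove s

variable [Nonempty T] (A : T → Finset E)

lemma continuous_maxWeight : Continuous (maxWeight A) := by
  have := Fintype.ofFinite T
  have hsup : maxWeight A = fun y => univ.sup' univ_nonempty fun s => ∑ e ∈ A s, y e :=
    funext fun y => (sup'_univ_eq_ciSup _).symm
  rw [hsup]
  fun_prop

lemma abs_maxWeight_le [Fintype E] (y : E → ℝ) : |maxWeight A y| ≤ ∑ e, |y e| := by
  have hterm (s : T) : |∑ e ∈ A s, y e| ≤ ∑ e, |y e| := (abs_sum_le_sum_abs _ _).trans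
    (sum_le_sum_of_subset_of_nonneg (subset_univ _) fun _ _ _ => abs_nonneg _)
  obtain ⟨s⟩ := ‹Nonempty T›
  exact abs_le.2 ⟨(abs_le.1 (hterm s)).1.trans (sum_le_maxWeight A y s),
    ciSup_le fun s => (abs_le.1 (hterm s)).2⟩

lemma integrable_maxWeight [Fintype E] {μ : E → Measure ℝ}
    [∀ e, IsProbabilityMeasure (μ e)] (hμ : ∀ e, Integrable id (μ e)) :
    Integrable (maxWeight A) (Measure.pi μ) := by
  have hsum : Integrable (fun y : E → ℝ => ∑ e, |y e|) (Measure.pi μ) :=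
    integrable_finsetSum _ fun e _ => (integrable_eval (hμ e)).abs
  exact hsum.mono' (continuous_maxWeight A).aestronglyMeasurable (ae_of_all _ (abs_maxWeight_le A))

end Finite

variable [Fintype T] [Nonempty T] (A : T → Finset E) {β : ℝ}

lemma maxWeight_le_softMax (hβ : 0 < β) (y : E → ℝ) : maxWeight A y ≤ softMax A β y := by
  refine ciSup_le fun s => ?_
  rw [softMax, ← div_eq_inv_mul, le_div_iff₀' hβ, le_log_iff_exp_le (by positivity)]
  exact single_le_sum (f := fun s => exp (β * ∑ e ∈ A s, y e)) (fun s _ => (exp_pos _).le)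
    (mem_univ s)

lemma softMax_le_maxWeight_add (hβ : 0 < β) (y : E → ℝ) :
    softMax A β y ≤ maxWeight A y + log (Fintype.card T) / β := by
  have hsum : ∑ s, exp (β * ∑ e ∈ A s, y e) ≤ Fintype.card T * exp (β * maxWeight A y) := by
    rw [← nsmul_eq_mul]
    refine sum_le_card_nsmul _ _ _ fun s _ => ?_
    gcongr
    exact sum_le_maxWeight A y s
  have hlog := log_le_log (by positivity) hsum
  rw [log_mul (by positivity) (by positivity), log_exp] at hlog
  rw [softMax, ← div_eq_inv_mul, div_le_iff₀ hβ]
  field_simp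
  linarith

lemma continuous_softMax (β : ℝ) : Continuous (softMax A β) := by
  unfold softMax
  refine continuous_const.mul (Continuous.log (by fun_prop) fun y => ?_)
  positivity

lemma integrable_softMax (hβ : 0 < β) [Fintype E] {μ : E → Measure ℝ}
    [∀ e, IsProbabilityMeasure (μ e)] (hμ : ∀ e, Integrable id (μ e)) :
    Integrable (softMax A β) (Measure.pi μ) :=
  integrable_of_le_of_le (continuous_softMax A β).aestronglyMeasurable
    (ae_of_all _ (maxWeight_le_softMax A hβ)) (ae_of_all _ (softMax_le_maxWeight_add A hβ))
    (integrable_maxWeight A hμ) ((integrable_maxWeight A hμ).add (integrable_const _))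

variable {A} [DecidableEq E]

lemma exists_softMax_update_eq (β : ℝ) (y : E → ℝ) (e : E) :
    ∃ P Q : ℝ, 0 ≤ P ∧ 0 ≤ Q ∧ 0 < P + Q ∧
      ∀ t, softMax A β (update y e t) = β⁻¹ * log (P + Q * exp (β * t)) := by
  let rest (s : T) : ℝ := ∑ i ∈ A s \ {e}, y i
  refine ⟨∑ s with e ∉ A s, exp (β * rest s), ∑ s with e ∈ A s, exp (β * rest s), by positivity,
    by positivity, ?_, fun t => ?_⟩
  · rw [add_comm, sum_filter_add_sum_filter_not]
    positivity
  · rw [softMax, ← sum_filter_not_add_sum_filter univ fun s => e ∈ A s, sum_mul]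
    congr 3 <;> refine sum_congr rfl fun s hs => ?_
    · have he : e ∉ A s := (mem_filter.1 hs).2
      rw [sum_update_of_notMem he]
      simp only [rest, sdiff_singleton_eq_erase, erase_eq_of_notMem he]
    · rw [sum_update_of_mem (mem_filter.1 hs).2, mul_add, add_comm, exp_add]

end SoftMax

section LogSumExp

open Real

variable {P Q β : ℝ}

/-- The derivative of `t ↦ β⁻¹ * log (P + Q * exp (β * t))`; it satisfies the logistic equation
`σ' = β * σ * (1 - σ)`, so all its derivatives are polynomials in it. -/
noncomputable def logistic (P Q β t : ℝ) : ℝ := Q * exp (β * t) / (P + Q * exp (β * t))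

lemma add_mul_exp_pos (hP : 0 ≤ P) (hQ : 0 ≤ Q) (hPQ : 0 < P + Q) (u : ℝ) : 0 < P + Q * exp u := by
  rcases hQ.eq_or_lt with rfl | hQ
  · simpa using hPQ
  · positivity

lemma logistic_mem_Icc (hP : 0 ≤ P) (hQ : 0 ≤ Q) (t : ℝ) :
    logistic P Q β t ∈ Set.Icc (0 : ℝ) 1 :=
  ⟨by unfold logistic; positivity, div_le_one_of_le₀ (le_add_of_nonneg_left hP) (by positivity)⟩

lemma hasDerivAt_logSumExp (hβ : β ≠ 0) {t : ℝ} (hD : P + Q * exp (β * t) ≠ 0) :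
    HasDerivAt (fun t => β⁻¹ * log (P + Q * exp (β * t))) (logistic P Q β t) t := by
  have hexp : HasDerivAt (fun t => P + Q * exp (β * t)) (Q * (exp (β * t) * β)) t := by
    simpa using ((((hasDerivAt_id t).const_mul β).exp).const_mul Q).const_add P
  refine ((hexp.log hD).const_mul β⁻¹).congr_deriv ?_
  rw [logistic]
  field

lemma hasDerivAt_logistic {t : ℝ} (hD : P + Q * exp (β * t) ≠ 0) :
    HasDerivAt (logistic P Q β) (β * (logistic P Q β t * (1 - logistic P Q β t))) t := by
  have hexp : HasDerivAt (fun t => Q * exp (β * t)) (Q * (exp (β * t) * β)) t := by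
    simpa using (((hasDerivAt_id t).const_mul β).exp).const_mul Q
  refine (hexp.div (hexp.const_add P) hD).congr_deriv ?_
  rw [logistic]
  field

lemma abs_logistic_mul_le_one (hP : 0 ≤ P) (hQ : 0 ≤ Q) (t : ℝ) :
    |logistic P Q β t * (1 - logistic P Q β t)| ≤ 1 ∧
      |logistic P Q β t * (1 - logistic P Q β t) * (1 - 2 * logistic P Q β t)| ≤ 1 := by
  obtain ⟨h₀, h₁⟩ := logistic_mem_Icc (β := β) hP hQ t
  have hprod : |logistic P Q β t * (1 - logistic P Q β t)| ≤ 1 := by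
    rw [abs_le]
    constructor <;> nlinarith
  refine ⟨hprod, ?_⟩
  rw [abs_mul]
  exact mul_le_one₀ hprod (abs_nonneg _) (abs_le.2 ⟨by linarith, by linarith⟩)

lemma abs_integral_logSumExp_sub_le (hβ : 0 < β) (hP : 0 ≤ P) (hQ : 0 ≤ Q) (hPQ : 0 < P + Q)
    {μ ν : Measure ℝ} [IsProbabilityMeasure μ] [IsProbabilityMeasure ν] (hμ : MemLp id 3 μ)
    (hν : MemLp id 3 ν) (hmeanμ : ∫ t, t ∂μ = 0) (hmeanν : ∫ t, t ∂ν = 0) :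
    |∫ t, β⁻¹ * log (P + Q * exp (β * t)) ∂μ - ∫ t, β⁻¹ * log (P + Q * exp (β * t)) ∂ν| ≤
      β * |∫ t, t ^ 2 ∂μ - ∫ t, t ^ 2 ∂ν| + β ^ 2 * (∫ t, |t| ^ 3 ∂μ + ∫ t, |t| ^ 3 ∂ν) := by
  have hD (t : ℝ) : P + Q * exp (β * t) ≠ 0 := (add_mul_exp_pos hP hQ hPQ _).ne'
  let σ := logistic P Q β
  have hσ (t : ℝ) : HasDerivAt σ (β * (σ t * (1 - σ t))) t := hasDerivAt_logistic (hD t)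
  have hσ' (t : ℝ) : HasDerivAt (fun t => β * (σ t * (1 - σ t)))
      (β ^ 2 * (σ t * (1 - σ t) * (1 - 2 * σ t))) t :=
    (((hσ t).mul ((hσ t).const_sub 1)).const_mul β).congr_deriv (by ring)
  refine (abs_integral_sub_integral_le_of_moments (fun t => hasDerivAt_logSumExp hβ.ne' (hD t))
    hσ hσ' (K := β ^ 2) (fun t => ?_) hμ hν hmeanμ hmeanν).trans ?_
  · rw [abs_mul, abs_sq]
    exact mul_le_of_le_one_right (sq_nonneg β) (abs_logistic_mul_le_one hP hQ t).2
  · gcongr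
    rw [abs_mul, abs_of_pos hβ]
    have := mul_le_of_le_one_right hβ.le (abs_logistic_mul_le_one (β := β) hP hQ 0).1
    linarith [hβ]

end LogSumExp

section MaxWeightComparison

variable {E T : Type*} [Fintype E] [Fintype T] [Nonempty T] {A : T → Finset E}
  {μ ν : E → Measure ℝ} [∀ e, IsProbabilityMeasure (μ e)] [∀ e, IsProbabilityMeasure (ν e)]

lemma abs_integral_softMax_sub_le {β : ℝ} (hβ : 0 < β) (hμ : ∀ e, MemLp id 3 (μ e))
    (hν : ∀ e, MemLp id 3 (ν e)) (hmeanμ : ∀ e, ∫ t, t ∂μ e = 0)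
    (hmeanν : ∀ e, ∫ t, t ∂ν e = 0) :
    |∫ y, softMax A β y ∂Measure.pi μ - ∫ y, softMax A β y ∂Measure.pi ν| ≤
      ∑ e, (β * |∫ t, t ^ 2 ∂μ e - ∫ t, t ^ 2 ∂ν e| +
        β ^ 2 * (∫ t, |t| ^ 3 ∂μ e + ∫ t, |t| ^ 3 ∂ν e)) := by
  classical
  refine abs_integral_pi_sub_integral_pi_le (fun s => integrable_softMax A hβ fun e => ?_)
    fun e y => ?_
  · by_cases he : e ∈ s
    · simpa [he] using (hν e).integrable (by norm_num)
    · simpa [he] using (hμ e).integrable (by norm_num)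
  · obtain ⟨P, Q, hP, hQ, hPQ, heq⟩ := exists_softMax_update_eq (A := A) β y e
    simp only [heq]
    exact abs_integral_logSumExp_sub_le hβ hP hQ hPQ (hμ e) (hν e) (hmeanμ e) (hmeanν e)

lemma abs_integral_maxWeight_sub_le {β : ℝ} (hβ : 0 < β) (hμ : ∀ e, MemLp id 3 (μ e))
    (hν : ∀ e, MemLp id 3 (ν e)) (hmeanμ : ∀ e, ∫ t, t ∂μ e = 0)
    (hmeanν : ∀ e, ∫ t, t ∂ν e = 0) :
    |∫ y, maxWeight A y ∂Measure.pi μ - ∫ y, maxWeight A y ∂Measure.pi ν| ≤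
      ∑ e, (β * |∫ t, t ^ 2 ∂μ e - ∫ t, t ^ 2 ∂ν e| +
        β ^ 2 * (∫ t, |t| ^ 3 ∂μ e + ∫ t, |t| ^ 3 ∂ν e)) + Real.log (Fintype.card T) / β := by
  have hsandwich {ρ : E → Measure ℝ} [∀ e, IsProbabilityMeasure (ρ e)]
      (hρ : ∀ e, MemLp id 3 (ρ e)) :
      ∫ y, maxWeight A y ∂Measure.pi ρ ≤ ∫ y, softMax A β y ∂Measure.pi ρ ∧
        ∫ y, softMax A β y ∂Measure.pi ρ ≤
          ∫ y, maxWeight A y ∂Measure.pi ρ + Real.log (Fintype.card T) / β := by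
    have hint (e : E) : Integrable id (ρ e) := (hρ e).integrable (by norm_num)
    have hmax := integrable_maxWeight A hint
    have hsoft := integrable_softMax A hβ hint
    refine ⟨integral_mono hmax hsoft (maxWeight_le_softMax A hβ), ?_⟩
    refine (integral_mono hsoft (hmax.add (integrable_const _))
      (softMax_le_maxWeight_add A hβ)).trans_eq ?_
    simp [integral_add hmax (integrable_const _)]
  have hsoft := abs_le.1 (abs_integral_softMax_sub_le (A := A) hβ hμ hν hmeanμ hmeanν)
  have hsμ := hsandwich hμ
  have hsν := hsandwich hν
  exact abs_le.2 ⟨by linarith, by linarith⟩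

end MaxWeightComparison

section CenteredBernoulli

open Function

variable {E T : Type*}

lemma maxWeight_ite_eq [Fintype T] [Nonempty T] {A : T → Finset E} {M : ℕ}
    (hA : ∀ s, #(A s) = M) (p : ℝ) {c : ℝ} (hc : 0 < c) (x : E → Bool) :
    maxWeight A (fun e => if x e then (1 - p) / c else -p / c) =
      ((maxCount A x : ℝ) - M * p) / c := by
  have hweight (s : T) : ∑ e ∈ A s, (if x e then (1 - p) / c else -p / c) =
      ((#{e ∈ A s | x e} : ℝ) - M * p) / c := by
    have hbit (e : E) : (if x e then (1 - p) / c else -p / c) =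
        ((if x e then 1 else 0) - p) / c := by
      split_ifs <;> simp
    simp only [hbit, ← sum_div, sum_sub_distrib, sum_boole, sum_const, nsmul_eq_mul, hA]
  refine le_antisymm (ciSup_le fun s => ?_) ?_
  · rw [hweight]
    gcongr
    exact card_filter_le_maxCount A x s
  · obtain ⟨s, hs⟩ := exists_card_filter_eq_maxCount A x
    rw [← hs, ← hweight]
    exact sum_le_maxWeight A _ s

/-- The law of `(B - p) / c` for a Bernoulli variable `B` of parameter `p`. -/
noncomputable def centeredBernoulli (p : unitInterval) (c : ℝ) : Measure ℝ :=
  Ber((1 - p) / c, -p / c, p)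

variable (p : unitInterval) (c : ℝ)

instance : IsProbabilityMeasure (centeredBernoulli p c) := by
  unfold centeredBernoulli
  infer_instance

lemma memLp_id_centeredBernoulli : MemLp id 3 (centeredBernoulli p c) := by
  rw [← integrable_norm_rpow_iff aestronglyMeasurable_id (by norm_num) (by norm_num)]
  exact integrable_bernoulliMeasure _ _ _ _

lemma integral_id_centeredBernoulli : ∫ t, t ∂centeredBernoulli p c = 0 := by
  rw [centeredBernoulli, integral_bernoulliMeasure, smul_eq_mul, smul_eq_mul]
  ring

lemma integral_sq_centeredBernoulli :
    ∫ t, t ^ 2 ∂centeredBernoulli p c = p * (1 - p) / c ^ 2 := by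
  rw [centeredBernoulli, integral_bernoulliMeasure, smul_eq_mul, smul_eq_mul]
  ring

variable {c} in
lemma integral_abs_pow_three_centeredBernoulli_le (hc : 0 < c) :
    ∫ t, |t| ^ 3 ∂centeredBernoulli p c ≤ p / c ^ 3 := by
  obtain ⟨p, hp₀, hp₁⟩ := p
  rw [centeredBernoulli, integral_bernoulliMeasure, abs_div, abs_div, abs_neg, abs_of_pos hc,
    abs_of_nonneg hp₀, abs_of_nonneg (sub_nonneg.2 hp₁), div_pow, div_pow, smul_eq_mul,
    smul_eq_mul, ← mul_div_assoc, ← mul_div_assoc, ← add_div]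
  gcongr
  have hcube : (1 - p) ^ 3 + (1 - p) * p ^ 2 ≤ 1 := by
    nlinarith [mul_nonneg hp₀ (sub_nonneg.2 hp₁)]
  calc p * (1 - p) ^ 3 + (1 - p) * p ^ 3 = p * ((1 - p) ^ 3 + (1 - p) * p ^ 2) := by ring
    _ ≤ p := mul_le_of_le_one_right hp₀ hcube

variable [Fintype E] [DecidableEq E]

lemma bernoulliExp_eq_integral_pi (p : E → unitInterval) (a b : E → ℝ) {F : (E → ℝ) → ℝ}
    (hF : Measurable F) :
    bernoulliExp (fun e => p e) (fun x => F fun e => if x e then a e else b e) =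
      ∫ y, F y ∂Measure.pi fun e => Ber(a e, b e, p e) := by
  have hmap (e : E) : Ber(true, false, p e).map (fun t => if t then a e else b e) =
      Ber(a e, b e, p e) := map_bernoulliMeasure _ _ _ _
  simp only [← hmap]
  have (e : E) : SigmaFinite (Ber(true, false, p e).map (fun t => if t then a e else b e)) := by
    rw [hmap]
    infer_instance
  rw [← Measure.pi_map_pi fun e => (measurable_of_finite _).aemeasurable,
    integral_map (measurable_of_finite _).aemeasurable hF.aestronglyMeasurable,
    integral_fintype Integrable.of_finite]
  refine sum_congr rfl fun x _ => ?_
  rw [smul_eq_mul, Measure.real, Measure.pi_singleton, ENNReal.toReal_prod]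
  congr 1
  refine prod_congr rfl fun e _ => ?_
  cases x e <;> simp [bernoulliWeight]

lemma bernoulliExp_sub_div (p : E → ℝ) (f : (E → Bool) → ℝ) (K c : ℝ) :
    bernoulliExp p (fun x => (f x - K) / c) = (bernoulliExp p f - K) / c := by
  nth_rewrite 2 [← one_mul K]
  rw [← bernoulliExp_one p]
  simp only [bernoulliExp, mul_one, sum_mul, ← sum_sub_distrib, sum_div]
  exact sum_congr rfl fun x _ => by ring

lemma integral_maxWeight_centeredBernoulli [Fintype T] [Nonempty T] {A : T → Finset E} {M : ℕ}
    (hA : ∀ s, #(A s) = M) (p : unitInterval) {c : ℝ} (hc : 0 < c) :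
    ∫ y, maxWeight A y ∂Measure.pi (fun _ => centeredBernoulli p c) =
      (bernoulliExp (fun _ => (p : ℝ)) (fun x => (maxCount A x : ℝ)) - M * p) / c := by
  rw [← bernoulliExp_sub_div]
  simp only [← maxWeight_ite_eq hA p hc]
  exact (bernoulliExp_eq_integral_pi (fun _ => p) _ _ (continuous_maxWeight A).measurable).symm

end CenteredBernoulli

section Gaussian

open scoped NNReal

lemma integral_sq_gaussianReal (v : ℝ≥0) : ∫ t, t ^ 2 ∂gaussianReal 0 v = v := by
  simpa using (variance_of_integral_eq_zero (X := id) (by fun_prop)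
    (integral_id_gaussianReal (μ := 0) (v := v))).symm.trans variance_id_gaussianReal

lemma integral_abs_pow_gaussianReal (v : ℝ≥0) (n : ℕ) :
    ∫ t, |t| ^ n ∂gaussianReal 0 v = √v ^ n * ∫ t, |t| ^ n ∂gaussianReal 0 1 := by
  have hmap : (gaussianReal 0 1).map (√v * ·) = gaussianReal 0 v := by
    rw [gaussianReal_map_const_mul, mul_zero, mul_one]
    congr 1
    exact NNReal.eq (Real.sq_sqrt v.2)
  rw [← hmap, integral_map (by fun_prop) (by fun_prop), ← integral_const_mul]
  simp only [abs_mul, mul_pow, abs_of_nonneg (Real.sqrt_nonneg _)]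

end Gaussian

section BernoulliGaussian

open scoped NNReal

variable {E T : Type*} [Fintype E] [Fintype T] [Nonempty T] {A : T → Finset E}

lemma abs_integral_maxWeight_gaussian_sub_bernoulli_le (v : ℝ≥0) (p : unitInterval) {c β : ℝ}
    (hc : 0 < c) (hβ : 0 < β) :
    |∫ y, maxWeight A y ∂Measure.pi (fun _ => gaussianReal 0 v) -
      ∫ y, maxWeight A y ∂Measure.pi (fun _ => centeredBernoulli p c)| ≤
      Fintype.card E * (β * |v - (p : ℝ) * (1 - p) / c ^ 2| +
        β ^ 2 * (√v ^ 3 * ∫ t, |t| ^ 3 ∂gaussianReal 0 1 + (p : ℝ) / c ^ 3)) +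
      Real.log (Fintype.card T) / β := by
  refine (abs_integral_maxWeight_sub_le hβ (fun _ => memLp_id_gaussianReal 3)
    (fun _ => memLp_id_centeredBernoulli p c) (fun _ => integral_id_gaussianReal)
    fun _ => integral_id_centeredBernoulli p c).trans ?_
  rw [sum_const, card_univ, nsmul_eq_mul, integral_sq_gaussianReal, integral_sq_centeredBernoulli,
    integral_abs_pow_gaussianReal]
  gcongr
  exact integral_abs_pow_three_centeredBernoulli_le p hc

end BernoulliGaussian

section GoeEdges

variable {N : ℕ} {ω : Fin N × Fin N → ℝ}

/-- The rescaled entries `-J_{ij} / √N` of a GOE matrix as weights on unordered pairs. The loops,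
which no cut contains, are divided by a further `√2`, so that the weights are identically
distributed. -/
noncomputable def goeWeight (ω : Fin N × Fin N → ℝ) (e : Sym2 (Fin N)) : ℝ :=
  -(√(N * if e.inf = e.sup then 2 else 1))⁻¹ * ω (e.inf, e.sup)

lemma map_goeWeight_apply [NeZero N] (e : Sym2 (Fin N)) :
    (goeMeasure N).map (goeWeight · e) = gaussianReal 0 (N : NNReal)⁻¹ := by
  have hN := NeZero.ne N
  unfold goeWeight goeMeasure
  set v : Fin N × Fin N → NNReal := fun p => if p.1 = p.2 then 2 else 1 with hv
  set c : ℝ := -(√(N * if e.inf = e.sup then 2 else 1))⁻¹ with hc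
  have heval := measurePreserving_eval (fun p => gaussianReal 0 (v p)) (e.inf, e.sup)
  calc (Measure.pi fun p => gaussianReal 0 (v p)).map (fun ω => c * ω (e.inf, e.sup))
      = (gaussianReal 0 (v (e.inf, e.sup))).map (c * ·) := by
        rw [← heval.map_eq, Measure.map_map (by fun_prop) heval.measurable]
        rfl
    _ = gaussianReal 0 (N : NNReal)⁻¹ := by
        rw [gaussianReal_map_const_mul, mul_zero]
        congr 1
        refine NNReal.eq ?_
        simp only [NNReal.coe_mul, NNReal.coe_mk, NNReal.coe_inv, NNReal.coe_natCast, hc, hv]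
        rw [neg_sq, inv_pow, Real.sq_sqrt (by positivity)]
        split_ifs <;> push_cast <;> field_simp

instance : IsProbabilityMeasure (goeMeasure N) := by
  unfold goeMeasure
  infer_instance

lemma measurable_goeWeight : Measurable (goeWeight (N := N)) := by
  unfold goeWeight
  fun_prop

lemma iIndepFun_goeWeight :
    iIndepFun (fun (e : Sym2 (Fin N)) ω => goeWeight ω e) (goeMeasure N) := by
  let c (p : Fin N × Fin N) : ℝ := -(√(N * if p.1 = p.2 then 2 else 1))⁻¹
  have hentries : iIndepFun (fun p ω => c p * ω p) (goeMeasure N) :=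
    iIndepFun_pi (X := fun p t => c p * t) fun p => by fun_prop
  exact hentries.precomp (g := fun e : Sym2 (Fin N) => (e.inf, e.sup))
    fun e e' h => Sym2.inf_eq_inf_and_sup_eq_sup.1 (Prod.mk.inj h)

lemma measurePreserving_goeWeight [NeZero N] :
    MeasurePreserving goeWeight (goeMeasure N)
      (Measure.pi fun _ => gaussianReal 0 (N : NNReal)⁻¹) := by
  refine ⟨measurable_goeWeight, ?_⟩
  have hpi := (iIndepFun_iff_map_fun_eq_pi_map fun e : Sym2 (Fin N) =>
    (measurable_pi_iff.1 measurable_goeWeight e).aemeasurable).1 iIndepFun_goeWeight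
  simpa only [map_goeWeight_apply] using hpi

lemma Jmat_eq (i j : Fin N) : Jmat ω i j = ω (s(i, j).inf, s(i, j).sup) := by
  rw [Jmat, Sym2.inf_mk, Sym2.sup_mk]
  split_ifs with hij
  · rw [inf_eq_left.2 hij, sup_eq_right.2 hij]
  · rw [inf_eq_right.2 (not_le.1 hij).le, sup_eq_left.2 (not_le.1 hij).le]

lemma spin_mul_spin (a b : Bool) : spin a * spin b = 1 - 2 * if a = b then 0 else 1 := by
  cases a <;> cases b <;> norm_num [spin]

lemma H0_eq_add_sum_cutSet (σ : Fin N → Bool) :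
    H0 ω σ = (√N)⁻¹ * ∑ i, ∑ j, Jmat ω i j + 4 * ∑ e ∈ cutSet {i | σ i}, goeWeight ω e := by
  let F (e : Sym2 (Fin N)) : ℝ := if e ∈ cutSet {i | σ i} then goeWeight ω e else 0
  have hF (i j : Fin N) : (√N)⁻¹ * (Jmat ω i j * spin (σ i) * spin (σ j)) =
      (√N)⁻¹ * Jmat ω i j + 2 * F s(i, j) := by
    rw [mul_assoc (Jmat ω i j), spin_mul_spin]
    by_cases hσ : σ i = σ j
    · simp [F, hσ]
    · have hij : i ⊓ j ≠ i ⊔ j := fun h => hσ (congrArg σ (inf_eq_sup.1 h))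
      simp only [Jmat_eq, Sym2.inf_mk, Sym2.sup_mk, hσ, ↓reduceIte, mul_one, goeWeight, mul_ite,
        neg_mul, mk_mem_cutSet, mem_filter, mem_univ, true_and, Bool.coe_iff_coe, not_false_eq_true,
        hij, mul_neg, F]
      ring
  simp only [H0, mul_sum, hF, sum_add_distrib]
  simp only [← mul_sum]
  rw [sum_sum_sym2_mk_eq_two_mul_sum fun a => by simp [F]]
  simp only [F, sum_ite_mem, univ_inter]
  ring

variable {α : ℚ} {k : ℕ}

lemma mem_SNset_iff (hk : α * (N : ℚ) = k) (σ : Fin N → Bool) :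
    σ ∈ SNset N α ↔ #{i | σ i} = k := by
  have hk' : (α : ℝ) * N = k := by exact_mod_cast hk
  have hspin (b : Bool) : spin b = 2 * (if b then 1 else 0) - 1 := by cases b <;> norm_num [spin]
  simp only [SNset, Set.mem_ofPred_eq, hspin, sum_sub_distrib, ← mul_sum, sum_boole, sum_const,
    card_univ, Fintype.card_fin, nsmul_eq_mul, mul_one]
  rw [← Nat.cast_inj (R := ℝ)]
  constructor <;> intro h <;> linarith

lemma sSup_H0_eq (hk : α * (N : ℚ) = k) (hkN : k ≤ N) :
    sSup (H0 ω '' SNset N α) =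
      (√N)⁻¹ * ∑ i, ∑ j, Jmat ω i j + 4 * maxWeight (cutFamily (Fin N) k) (goeWeight ω) := by
  have := nonempty_subtype_card_eq (V := Fin N) (by simpa using hkN)
  refine IsGreatest.csSup_eq ⟨?_, ?_⟩
  · obtain ⟨s, hs⟩ := exists_eq_ciSup_of_finite
      (f := fun s => ∑ e ∈ cutFamily (Fin N) k s, goeWeight ω e)
    have hfilter : ({i | decide (i ∈ s.1)} : Finset (Fin N)) = s := by simp
    refine ⟨fun i => decide (i ∈ s.1), ?_, ?_⟩
    · rw [mem_SNset_iff hk, hfilter, s.2]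
    · rw [H0_eq_add_sum_cutSet, hfilter, maxWeight, ← hs, cutFamily]
  · rintro _ ⟨σ, hσ, rfl⟩
    rw [H0_eq_add_sum_cutSet]
    gcongr
    exact sum_le_maxWeight (cutFamily (Fin N) k) (goeWeight ω) ⟨_, (mem_SNset_iff hk σ).1 hσ⟩

lemma integrable_Jmat (i j : Fin N) : Integrable (Jmat · i j) (goeMeasure N) := by
  simp only [Jmat_eq]
  exact integrable_eval ((memLp_id_gaussianReal 1).integrable le_rfl)

lemma integral_Jmat (i j : Fin N) : ∫ ω, Jmat ω i j ∂goeMeasure N = 0 := by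
  simp only [Jmat_eq]
  exact integral_eval.trans integral_id_gaussianReal

lemma Emax_H0_eq [NeZero N] (hk : α * (N : ℚ) = k) (hkN : k ≤ N) :
    Emax N α H0 = 4 * ∫ y, maxWeight (cutFamily (Fin N) k) y
      ∂Measure.pi fun _ => gaussianReal 0 (N : NNReal)⁻¹ := by
  have := nonempty_subtype_card_eq (V := Fin N) (by simpa using hkN)
  have hcont := continuous_maxWeight (cutFamily (Fin N) k)
  have hlaw := measurePreserving_goeWeight (N := N)
  have hmax : Integrable (fun ω => maxWeight (cutFamily (Fin N) k) (goeWeight ω)) (goeMeasure N) :=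
    hlaw.integrable_comp_of_integrable <| integrable_maxWeight _ fun _ =>
      (memLp_id_gaussianReal 1).integrable le_rfl
  have hrow (i : Fin N) : Integrable (fun ω => ∑ j, Jmat ω i j) (goeMeasure N) :=
    integrable_finsetSum _ fun j _ => integrable_Jmat i j
  have htotal : ∫ ω, ∑ i, ∑ j, Jmat ω i j ∂goeMeasure N = 0 := by
    rw [integral_finsetSum _ fun i _ => hrow i]
    refine sum_eq_zero fun i _ => ?_
    rw [integral_finsetSum _ fun j _ => integrable_Jmat i j]
    exact sum_eq_zero fun j _ => integral_Jmat i j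
  simp only [Emax, sSup_H0_eq hk hkN]
  rw [integral_add ((integrable_finsetSum _ fun i _ => hrow i).const_mul _) (hmax.const_mul _),
    integral_const_mul, integral_const_mul, htotal, mul_zero, zero_add, ← hlaw.map_eq,
    integral_map hlaw.aemeasurable hcont.aestronglyMeasurable]

end GoeEdges

section IteratedLimit

variable {ι κ E : Type*} [PseudoMetricSpace E] [CompleteSpace E]

lemma exists_tendsto_of_eventually_eventually_dist_lt {l : Filter ι} {m : Filter κ} [l.NeBot]
    [m.NeBot] {X : ι → E} {Y : κ → ι → E} {g : κ → E}
    (hY : ∀ᶠ a in m, Filter.Tendsto (Y a) l (nhds (g a)))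
    (hXY : ∀ ε > 0, ∀ᶠ a in m, ∀ᶠ n in l, dist (X n) (Y a n) < ε) :
    ∃ L, Filter.Tendsto g m (nhds L) ∧ Filter.Tendsto X l (nhds L) := by
  have hXg (ε : ℝ) (hε : 0 < ε) : ∀ᶠ a in m, ∀ᶠ n in l, dist (X n) (g a) < ε := by
    filter_upwards [hY, hXY (ε / 2) (half_pos hε)] with a hYa hXa
    filter_upwards [hXa, Metric.tendsto_nhds.1 hYa (ε / 2) (half_pos hε)] with n h₁ h₂
    linarith [dist_triangle (X n) (Y a n) (g a)]
  have hcauchy : Cauchy (Filter.map X l) := by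
    refine Metric.cauchy_iff.2 ⟨inferInstance, fun ε hε => ?_⟩
    obtain ⟨a, ha⟩ := (hXg (ε / 2) (half_pos hε)).exists
    refine ⟨Metric.ball (g a) (ε / 2), ha, fun x hx y hy => ?_⟩
    rw [Metric.mem_ball] at hx hy
    linarith [dist_triangle_right x y (g a)]
  obtain ⟨L, hL⟩ := CompleteSpace.complete hcauchy
  refine ⟨L, Metric.tendsto_nhds.2 fun ε hε => ?_, hL⟩
  filter_upwards [hXg (ε / 2) (half_pos hε)] with a ha
  obtain ⟨n, hna, hnL⟩ := (ha.and (Metric.tendsto_nhds.1 hL (ε / 2) (half_pos hε))).exists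
  linarith [dist_triangle_left (g a) L (X n)]

end IteratedLimit

section AdmissibleSizes

variable {α : ℚ} {N : ℕ}

/-- The limit `N → ∞` along the sizes `N` for which `α N` is a natural number. -/
def admissible (α : ℚ) : Filter ℕ := Filter.atTop ⊓ Filter.principal {N | alphaIntegral α N}

lemma eventually_admissible_alphaIntegral : ∀ᶠ N in admissible α, alphaIntegral α N :=
  Filter.mem_inf_of_right (Filter.mem_principal_self _)

lemma toNat_num_div_den (hα : 0 ≤ α) : (α.num.toNat : ℚ) / α.den = α := by
  have hnum : ((α.num.toNat : ℤ) : ℚ) = α.num := by rw [Int.toNat_of_nonneg (Rat.num_nonneg.2 hα)]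
  rw [← Int.cast_natCast, hnum, Rat.num_div_den]

lemma mul_den_mul (hα : 0 ≤ α) (m : ℕ) :
    α * ((α.den * m : ℕ) : ℚ) = ((α.num.toNat * m : ℕ) : ℚ) := by
  have hden : (α.den : ℚ) ≠ 0 := mod_cast α.den_ne_zero
  have hnum := (div_eq_iff hden).1 (toNat_num_div_den hα)
  push_cast
  rw [hnum, mul_assoc]

lemma alphaIntegral.den_dvd (h : alphaIntegral α N) : α.den ∣ N := by
  obtain ⟨k, hk⟩ := h
  have hmul : α.num * N = k * α.den := by
    have : (α.num : ℚ) * N = k * α.den := by rw [← hk, ← Rat.mul_den_eq_num]; ring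
    exact mod_cast this
  have hdvd : (α.den : ℤ) ∣ α.num * N := ⟨k, by rw [hmul, mul_comm]⟩
  exact Int.natCast_dvd_natCast.1 (α.isCoprime_num_den.symm.dvd_of_dvd_mul_left hdvd)

lemma admissible_neBot (hα : 0 ≤ α) : (admissible α).NeBot := by
  rw [admissible, ← Filter.frequently_mem_iff_neBot, Filter.frequently_atTop]
  exact fun n => ⟨α.den * n, Nat.le_mul_of_pos_left n α.den_pos, α.num.toNat * n,
    mul_den_mul hα n⟩

end AdmissibleSizes

section Comparison

/-- The excess of the expected maximum `α`-cut of `G(N, d/N)` over the mean size `N d α (1 - α)`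
of a fixed cut, on the scale `√d N`. -/
noncomputable def excessCut (α : ℚ) (d : ℝ) (N : ℕ) : ℝ :=
  (erExp N (d / N) (fun G => (mcut α G : ℝ)) - N * d * α * (1 - α)) / (√d * N)

/-- The expected ground state energy per spin of the Sherrington–Kirkpatrick model on `S_N(α)`,
normalized by `1/4`. -/
noncomputable def groundEnergy (α : ℚ) (N : ℕ) : ℝ := 1 / (4 * N) * Emax N α H0

variable {α : ℚ} {d : ℝ} {N k : ℕ}

lemma exists_tendsto_excessCut (hα₀ : 0 ≤ α) (hα₁ : α ≤ 1) (hd : 0 < d) :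
    ∃ l, Filter.Tendsto (excessCut α d) (admissible α) (nhds l) := by
  have hPq : α.num.toNat ≤ α.den := by
    rw [← toNat_num_div_den hα₀, div_le_one (mod_cast α.den_pos)] at hα₁
    exact mod_cast hα₁
  obtain ⟨l, hl⟩ := exists_tendsto_expMaxCut_div hd.le hPq α.den_pos
  have hdiv : Filter.Tendsto (· / α.den) (admissible α) Filter.atTop :=
    Filter.tendsto_inf_left (Filter.map_div_atTop_eq_nat α.den α.den_pos).le
  refine ⟨_, ((((hl.comp hdiv).div_const α.den).sub_const (d * α * (1 - α))).div_const √d).congr'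
    ?_⟩
  filter_upwards [eventually_admissible_alphaIntegral,
    Filter.mem_inf_of_left (tendsto_natCast_atTop_atTop.eventually_ge_atTop d)] with N hN hdN
  obtain ⟨m, rfl⟩ := hN.den_dvd
  have hm : (m : ℝ) ≠ 0 := by
    rintro hm
    rw [Nat.cast_mul, hm, mul_zero] at hdN
    exact hdN.not_gt hd
  have hden : (α.den : ℝ) ≠ 0 := mod_cast α.den_ne_zero
  have hsqrt : √d ≠ 0 := (Real.sqrt_pos.2 hd).ne'
  rw [excessCut, erExp_mcut_eq_expMaxCut hdN (mul_den_mul hα₀ m)]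
  rw [Function.comp_apply, Nat.mul_div_cancel_left m α.den_pos, Nat.cast_mul]
  field_simp

lemma excessCut_eq_integral (hd : 0 < d) (hdN : d ≤ N) (hk : α * (N : ℚ) = k) (hkN : k ≤ N)
    (p : unitInterval) (hp : (p : ℝ) = d / N) :
    excessCut α d N = (∫ y, maxWeight (cutFamily (Fin N) k) y
      ∂Measure.pi fun _ => centeredBernoulli p √d) / N := by
  have hcard (s : {s : Finset (Fin N) // #s = k}) : #(cutFamily (Fin N) k s) = k * (N - k) := by
    rw [cutFamily, card_cutSet, s.2, Fintype.card_fin]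
  have := nonempty_subtype_card_eq (V := Fin N) (by simpa using hkN)
  have hN : (N : ℝ) ≠ 0 := (hd.trans_le hdN).ne'
  have hsqrt : √d ≠ 0 := (Real.sqrt_pos.2 hd).ne'
  have hk' : (k : ℝ) = α * N := mod_cast hk.symm
  rw [integral_maxWeight_centeredBernoulli hcard p (Real.sqrt_pos.2 hd), excessCut,
    erExp_mcut_eq_expMaxCut hdN hk, expMaxCut, Fintype.card_fin, edgeProb_eq_div hdN, hp,
    Nat.cast_mul, Nat.cast_sub hkN, hk']
  field_simp

lemma groundEnergy_eq_integral [NeZero N] (hk : α * (N : ℚ) = k) (hkN : k ≤ N) :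
    groundEnergy α N = (∫ y, maxWeight (cutFamily (Fin N) k) y
      ∂Measure.pi fun _ => gaussianReal 0 (N : NNReal)⁻¹) / N := by
  rw [groundEnergy, Emax_H0_eq hk hkN]
  field_simp

lemma abs_inv_sub_mul_div_sq_sqrt (hd : 0 < d) (n : ℝ) :
    |n⁻¹ - d / n * (1 - d / n) / √d ^ 2| = d / n ^ 2 := by
  rw [Real.sq_sqrt hd.le, ← abs_of_nonneg (show 0 ≤ d / n ^ 2 by positivity)]
  congr 1
  rcases eq_or_ne n 0 with rfl | hn
  · simp
  · field_simp
    ring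

lemma abs_groundEnergy_sub_excessCut_le {β : ℝ} (hβ : 0 < β) (hd : 0 < d) (hdN : d ≤ N)
    (hk : α * (N : ℚ) = k) (hkN : k ≤ N) :
    |groundEnergy α N - excessCut α d N| ≤
      β * (d / N) + β ^ 2 * ((∫ t, |t| ^ 3 ∂gaussianReal 0 1) / √N + 1 / √d) + Real.log 2 / β := by
  have hN : (0 : ℝ) < N := hd.trans_le hdN
  have : NeZero N := ⟨by rintro rfl; simp at hN⟩
  have := nonempty_subtype_card_eq (V := Fin N) (by simpa using hkN)
  let p : unitInterval := ⟨d / N, by positivity, div_le_one_of_le₀ hdN hN.le⟩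
  have hpairs : (Fintype.card (Sym2 (Fin N)) : ℝ) ≤ N ^ 2 := by
    rw [Sym2.card, Fintype.card_fin]
    exact mod_cast choose_two_succ_le_sq N
  have hcuts : Real.log (Fintype.card {s : Finset (Fin N) // #s = k}) ≤ N * Real.log 2 := by
    rw [← Real.log_pow]
    refine Real.log_le_log (mod_cast Fintype.card_pos) ?_
    exact mod_cast (Fintype.card_subtype_le _).trans (by simp)
  have hthird (κ : ℝ) : √((N : NNReal)⁻¹ : NNReal) ^ 3 * κ + (p : ℝ) / √d ^ 3 =
      (κ / √N + 1 / √d) / N := by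
    have hsqrtN : √N ^ 3 = N * √N := by rw [pow_succ, Real.sq_sqrt hN.le]
    have hsqrtd : √d ^ 3 = d * √d := by rw [pow_succ, Real.sq_sqrt hd.le]
    rw [NNReal.coe_inv, NNReal.coe_natCast, Real.sqrt_inv, inv_pow, hsqrtN, hsqrtd]
    simp only [p]
    field_simp
  have hbound := abs_integral_maxWeight_gaussian_sub_bernoulli_le (A := cutFamily (Fin N) k)
    (N : NNReal)⁻¹ p (Real.sqrt_pos.2 hd) hβ
  rw [hthird, NNReal.coe_inv, NNReal.coe_natCast, abs_inv_sub_mul_div_sq_sqrt hd] at hbound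
  rw [excessCut_eq_integral hd hdN hk hkN p rfl, groundEnergy_eq_integral hk hkN, ← sub_div,
    abs_div, abs_of_pos hN, div_le_iff₀ hN]
  calc _ ≤ _ := hbound
    _ ≤ N ^ 2 * (β * (d / N ^ 2) +
        β ^ 2 * (((∫ t, |t| ^ 3 ∂gaussianReal 0 1) / √N + 1 / √d) / N)) +
        N * Real.log 2 / β := by gcongr
    _ = _ := by field_simp

/-- The three limits are taken in the order `N → ∞`, `d → ∞`, `β → ∞`. -/
lemma eventually_abs_groundEnergy_sub_excessCut_lt (hα : α ≤ 1) {ε : ℝ} (hε : 0 < ε) :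
    ∀ᶠ d : ℝ in Filter.atTop, ∀ᶠ N in admissible α,
      |groundEnergy α N - excessCut α d N| < ε := by
  let κ : ℝ := ∫ t, |t| ^ 3 ∂gaussianReal 0 1
  have hcast : Filter.Tendsto (Nat.cast : ℕ → ℝ) (admissible α) Filter.atTop :=
    Filter.tendsto_inf_left tendsto_natCast_atTop_atTop
  have hlimβ : Filter.Tendsto (fun β : ℝ => Real.log 2 / β) Filter.atTop (nhds 0) :=
    tendsto_const_nhds.div_atTop Filter.tendsto_id
  obtain ⟨β, hβε, hβ⟩ :=
    ((hlimβ.eventually_lt_const hε).and (Filter.eventually_gt_atTop 0)).exists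
  have hlimd : Filter.Tendsto (fun d => β ^ 2 * (1 / √d) + Real.log 2 / β) Filter.atTop
      (nhds (β ^ 2 * 0 + Real.log 2 / β)) :=
    ((tendsto_const_nhds.div_atTop Real.tendsto_sqrt_atTop).const_mul _).add_const _
  rw [mul_zero, zero_add] at hlimd
  filter_upwards [hlimd.eventually_lt_const hβε, Filter.eventually_gt_atTop 0] with d hdε hd
  have hlimN : Filter.Tendsto
      (fun N : ℕ => β * (d / N) + β ^ 2 * (κ / √N + 1 / √d) + Real.log 2 / β) (admissible α)
      (nhds (β * 0 + β ^ 2 * (0 + 1 / √d) + Real.log 2 / β)) :=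
    (((tendsto_const_nhds.div_atTop hcast).const_mul _).add
      (((tendsto_const_nhds.div_atTop (Real.tendsto_sqrt_atTop.comp hcast)).add_const _).const_mul
        _)).add_const _
  rw [mul_zero, zero_add, zero_add] at hlimN
  filter_upwards [hlimN.eventually_lt_const hdε, hcast.eventually_ge_atTop d,
    eventually_admissible_alphaIntegral] with N hNε hdN ⟨k, hk⟩
  have hkN : k ≤ N := by
    have : (k : ℚ) ≤ N := hk ▸ mul_le_of_le_one_left N.cast_nonneg hα
    exact mod_cast this
  exact (abs_groundEnergy_sub_excessCut_le hβ hd hdN hk hkN).trans_lt hNε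

end Comparison

theorem statement5_general (α : ℚ) (hα₀ : 0 ≤ α) (hα₁ : α ≤ 1) :
    ∃ L : ℝ, ∃ g : ℝ → ℝ,
      (∀ d > 0, Filter.Tendsto (excessCut α d) (admissible α) (nhds (g d))) ∧
      Filter.Tendsto g Filter.atTop (nhds L) ∧
      Filter.Tendsto (groundEnergy α) (admissible α) (nhds L) := by
  have := admissible_neBot hα₀
  choose! g hg using fun (d : ℝ) (hd : 0 < d) => exists_tendsto_excessCut hα₀ hα₁ hd
  obtain ⟨L, hgL, hL⟩ := exists_tendsto_of_eventually_eventually_dist_lt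
    ((Filter.eventually_gt_atTop 0).mono hg)
    fun ε hε => eventually_abs_groundEnergy_sub_excessCut_lt hα₁ hε
  exact ⟨L, g, hg, hgL, hL⟩

/-- Fix a rational `α ∈ (0,1/2)`.  The limits below exist and
`lim_{d→∞} lim_{N→∞} (E_{G(N,d/N)}[MCUT_α] − N d α(1−α))/(√d N)
  = lim_{N→∞} (1/(4N)) E[max_{σ ∈ S_N(α)} H_0(σ)]`,
where `N` ranges over integers with `αN` an integer. -/
theorem statement5 (α : ℚ) (hα0 : 0 < α) (hα : α < 1 / 2) :
    ∃ L : ℝ, ∃ g : ℕ → ℝ,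
      (∀ d : ℕ, 0 < d →
        Filter.Tendsto (fun N : ℕ =>
            (erExp N ((d : ℝ) / N) (fun G => (mcut α G : ℝ)) -
              (N : ℝ) * d * (α : ℝ) * (1 - (α : ℝ))) / (Real.sqrt d * N))
          (Filter.atTop ⊓ Filter.principal {N | alphaIntegral α N}) (nhds (g d))) ∧
      Filter.Tendsto g Filter.atTop (nhds L) ∧
      Filter.Tendsto (fun N : ℕ => (1 / (4 * (N : ℝ))) * Emax N α (fun ω σ => H0 ω σ))
        (Filter.atTop ⊓ Filter.principal {N | alphaIntegral α N}) (nhds L) := by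
  obtain ⟨L, g, hg, hgL, hL⟩ := statement5_general α hα0.le (by linarith)
  exact ⟨L, fun d => g d, fun d hd => hg d (mod_cast hd), hgL.comp tendsto_natCast_atTop_atTop, hL⟩
end

section
/- For every N ≥ 1, β > 0, α ∈ (0,1/2) with αN an integer, the map v ↦ F_N(v,β;α) is differentiable on (0,1) and its derivative satisfies (1/β) ∂_v F_N(v,β;α) = −2β (2α−1)² ((1−√v)/√v) · E[ T(v,α) − ⟨R₁₂⟩_v ]. -/
open Finset MeasureTheory ProbabilityTheory

noncomputable section

/-- The interpolating Hamiltonian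
`H_v(σ) = N^{-1/2} ∑_{i,j} J_{ij}(σ_i − √v(2α−1))(σ_j − √v(2α−1))`. -/
def Hv {N : ℕ} (α : ℚ) (v : ℝ) (ω : (Fin N × Fin N) → ℝ) (σ : Fin N → Bool) : ℝ :=
  (Real.sqrt N)⁻¹ * ∑ i, ∑ j, Jmat ω i j *
    (spin (σ i) - Real.sqrt v * (2 * (α : ℝ) - 1)) *
    (spin (σ j) - Real.sqrt v * (2 * (α : ℝ) - 1))

/-- The interpolating free energy
`F_N(v,β;α) = N^{-1} E[log ∑_{σ ∈ S_N(α)} exp(β H_v(σ))]`. -/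
def FN (N : ℕ) (α : ℚ) (v β : ℝ) : ℝ :=
  (N : ℝ)⁻¹ * ∫ ω, Real.log (∑ σ ∈ SNfinset N α, Real.exp (β * Hv α v ω σ)) ∂(goeMeasure N)

/-- The overlap `R₁₂ = N^{-1} ∑ᵢ τ¹ᵢ τ²ᵢ` of two configurations, where
`τᵢ = σᵢ − √v(2α−1)`. -/
def R12 {N : ℕ} (α : ℚ) (v : ℝ) (σ₁ σ₂ : Fin N → Bool) : ℝ :=
  (N : ℝ)⁻¹ * ∑ i, (spin (σ₁ i) - Real.sqrt v * (2 * (α : ℝ) - 1)) *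
    (spin (σ₂ i) - Real.sqrt v * (2 * (α : ℝ) - 1))

/-- `T(v,α) = α(1−√v(2α−1))² + (1−α)(1+√v(2α−1))²`. -/
def Tva (α : ℚ) (v : ℝ) : ℝ :=
  (α : ℝ) * (1 - Real.sqrt v * (2 * (α : ℝ) - 1)) ^ 2 +
    (1 - (α : ℝ)) * (1 + Real.sqrt v * (2 * (α : ℝ) - 1)) ^ 2

/-- The two-replica Gibbs average `⟨h⟩_v` at fixed disorder `ω`: the average of `h` over
two independent samples from the Gibbs measure on `S_N(α)` proportional to `exp(β H_v(σ))`. -/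
def gibbs2 (N : ℕ) (α : ℚ) (v β : ℝ) (ω : (Fin N × Fin N) → ℝ)
    (h : (Fin N → Bool) → (Fin N → Bool) → ℝ) : ℝ :=
  (∑ σ₁ ∈ SNfinset N α, ∑ σ₂ ∈ SNfinset N α,
      h σ₁ σ₂ * Real.exp (β * Hv α v ω σ₁) * Real.exp (β * Hv α v ω σ₂)) /
    (∑ σ ∈ SNfinset N α, Real.exp (β * Hv α v ω σ)) ^ 2

/-- `E[⟨h⟩_v]`: the expectation over the disorder of the two-replica Gibbs average. -/
def Egibbs2 (N : ℕ) (α : ℚ) (v β : ℝ)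
    (h : (Fin N → Bool) → (Fin N → Bool) → ℝ) : ℝ :=
  ∫ ω, gibbs2 N α v β ω h ∂(goeMeasure N)

end

/-!
Write `Z` for the partition function. The derivative of `E[log Z]` along `v` is
`E⟨∂ᵥH(σ)⟩`, the Gibbs average of a centered Gaussian field. Integrating by parts in each
independent entry of `J`, where the derivative falls on the Gibbs weights, turns it into
`E⟨C(σ, σ) - ⟨C(σ, τ)⟩⟩` with `C(σ, τ) = E[∂ᵥH(σ) H(τ)]`, the inner average being over an
independent replica `τ`.

For a GOE matrix the bilinear forms satisfy
`E[(x ⬝ Jy) (z ⬝ Jw)] = (x ⬝ z) (y ⬝ w) + (x ⬝ w) (y ⬝ z)`. Since `v` enters only through a shift of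
the spins by a multiple of the all-ones vector, `C(σ, τ)` is proportional to `R₁₂(σ, τ)` times the
sum of the shifted spins of `τ`. The constraint defining `S_N(α)` fixes this sum, so `C` is a
constant multiple of `R₁₂`, and it also fixes the diagonal value `R₁₂(σ, σ) = T(v, α)`.
-/

noncomputable section

section Stein

open scoped NNReal

lemma hasDerivAt_gaussianPDFReal (m : ℝ) (v : ℝ≥0) (x : ℝ) :
    HasDerivAt (gaussianPDFReal m v) (-((x - m) / v) * gaussianPDFReal m v x) x := by
  rw [gaussianPDFReal_def]
  have hexponent : HasDerivAt (fun x : ℝ ↦ -(x - m) ^ 2 / (2 * (v : ℝ))) (-((x - m) / v)) x := by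
    refine ((((hasDerivAt_id x).sub_const m).pow 2).neg.div_const (2 * (v : ℝ))).congr_deriv ?_
    simp only [id]
    rw [← neg_div, ← mul_div_mul_left _ (v : ℝ) two_ne_zero]
    ring
  exact (hexponent.exp.const_mul _).congr_deriv (by ring)

lemma integrable_gaussianReal_iff {m : ℝ} {v : ℝ≥0} (hv : v ≠ 0) {f : ℝ → ℝ} :
    Integrable f (gaussianReal m v) ↔ Integrable (fun x ↦ gaussianPDFReal m v x * f x) := by
  rw [gaussianReal_of_var_ne_zero m hv, integrable_withDensity_iff_integrable_smul'
    (measurable_gaussianPDF m v) (ae_of_all _ fun _ ↦ gaussianPDF_lt_top)]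
  simp only [toReal_gaussianPDF, smul_eq_mul]

theorem integral_sub_mul_gaussianReal {m : ℝ} {v : ℝ≥0} {f f' : ℝ → ℝ}
    (hf : ∀ x, HasDerivAt f (f' x) x) (hf_int : Integrable f (gaussianReal m v))
    (hxf_int : Integrable (fun x ↦ (x - m) * f x) (gaussianReal m v))
    (hf'_int : Integrable f' (gaussianReal m v)) :
    ∫ x, (x - m) * f x ∂gaussianReal m v = v * ∫ x, f' x ∂gaussianReal m v := by
  rcases eq_or_ne v 0 with rfl | hv
  · simp
  have hpdf (x : ℝ) : HasDerivAt (fun x ↦ -(v : ℝ) * gaussianPDFReal m v x)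
      ((x - m) * gaussianPDFReal m v x) x := by
    have hv' : (v : ℝ) ≠ 0 := by exact_mod_cast hv
    refine ((hasDerivAt_gaussianPDFReal m v x).const_mul (-(v : ℝ))).congr_deriv ?_
    field_simp
  rw [integrable_gaussianReal_iff hv] at hf_int hxf_int hf'_int
  have hparts := integral_mul_deriv_eq_deriv_mul_of_integrable
    (fun x _ ↦ hf x) (fun x _ ↦ hpdf x)
    (hxf_int.congr (ae_of_all _ fun x ↦ by simp only [Pi.mul_apply]; ring))
    ((hf'_int.const_mul (-(v : ℝ))).congr (ae_of_all _ fun x ↦ by simp only [Pi.mul_apply]; ring))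
    ((hf_int.const_mul (-(v : ℝ))).congr (ae_of_all _ fun x ↦ by simp only [Pi.mul_apply]; ring))
  simp only [integral_gaussianReal_eq_integral_smul hv, smul_eq_mul]
  calc ∫ x, gaussianPDFReal m v x * ((x - m) * f x)
      = ∫ x, f x * ((x - m) * gaussianPDFReal m v x) := by congr with x; ring
    _ = -∫ x, f' x * (-(v : ℝ) * gaussianPDFReal m v x) := hparts
    _ = v * ∫ x, gaussianPDFReal m v x * f' x := by
      rw [← integral_neg, ← integral_const_mul]
      congr with x
      ring

variable {ι : Type*} [Fintype ι] [DecidableEq ι]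

lemma measurePreserving_update_pi {X : ι → Type*} [∀ i, MeasurableSpace (X i)]
    (μ : ∀ i, Measure (X i)) [∀ i, SigmaFinite (μ i)] (p : ι) [IsProbabilityMeasure (μ p)] :
    MeasurePreserving (fun z : (∀ i, X i) × X p ↦ Function.update z.1 p z.2)
      ((Measure.pi μ).prod (μ p)) (Measure.pi μ) := by
  refine ⟨measurable_update', (Measure.pi_eq fun s hs ↦ ?_).symm⟩
  have hpreimage : (fun z : (∀ i, X i) × X p ↦ Function.update z.1 p z.2) ⁻¹' Set.univ.pi s =
      Set.univ.pi (Function.update s p Set.univ) ×ˢ s p := by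
    ext z
    simp only [Set.mem_preimage, Set.mem_univ_pi, Set.mem_prod]
    rw [Function.forall_update_iff s (p := fun i t ↦ z.1 i ∈ t),
      Function.forall_update_iff z.1 (p := fun i x ↦ x ∈ s i)]
    simp [and_comm]
  rw [Measure.map_apply measurable_update' (.univ_pi hs), hpreimage, Measure.prod_prod,
    Measure.pi_pi, ← mul_prod_erase univ _ (mem_univ p),
    ← mul_prod_erase univ (fun i ↦ μ i (s i)) (mem_univ p), mul_comm]
  simp only [Function.update_self, measure_univ, one_mul]
  congr 1
  exact prod_congr rfl fun i hi ↦ by rw [Function.update_of_ne (ne_of_mem_erase hi)]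

lemma integral_pi_eq_integral_update {E : Type*} [NormedAddCommGroup E] [NormedSpace ℝ E]
    {X : ι → Type*} [∀ i, MeasurableSpace (X i)] {μ : ∀ i, Measure (X i)} [∀ i, SigmaFinite (μ i)]
    (p : ι) [IsProbabilityMeasure (μ p)] {f : (∀ i, X i) → E} (hf : Integrable f (Measure.pi μ)) :
    ∫ ω, f ω ∂Measure.pi μ = ∫ ω, ∫ x, f (Function.update ω p x) ∂μ p ∂Measure.pi μ := by
  have hupdate := measurePreserving_update_pi μ p
  calc ∫ ω, f ω ∂Measure.pi μ
      = ∫ z, f (Function.update z.1 p z.2) ∂(Measure.pi μ).prod (μ p) := by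
        rw [← integral_map hupdate.aemeasurable (hupdate.map_eq.symm ▸ hf.aestronglyMeasurable),
          hupdate.map_eq]
    _ = ∫ ω, ∫ x, f (Function.update ω p x) ∂μ p ∂Measure.pi μ :=
        integral_prod _ (hupdate.integrable_comp_of_integrable hf)

theorem integral_eval_sub_mul_pi_gaussianReal {m : ι → ℝ} {s : ι → ℝ≥0} {p : ι}
    {f f' : (ι → ℝ) → ℝ}
    (hf : ∀ ω, HasDerivAt (fun x ↦ f (Function.update ω p x)) (f' ω) (ω p))
    (hf_int : Integrable f (Measure.pi fun i ↦ gaussianReal (m i) (s i)))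
    (hxf_int : Integrable (fun ω ↦ (ω p - m p) * f ω)
      (Measure.pi fun i ↦ gaussianReal (m i) (s i)))
    (hf'_int : Integrable f' (Measure.pi fun i ↦ gaussianReal (m i) (s i))) :
    ∫ ω, (ω p - m p) * f ω ∂(Measure.pi fun i ↦ gaussianReal (m i) (s i)) =
      s p * ∫ ω, f' ω ∂(Measure.pi fun i ↦ gaussianReal (m i) (s i)) := by
  have hupdate := measurePreserving_update_pi (fun i ↦ gaussianReal (m i) (s i)) p
  rw [integral_pi_eq_integral_update p hxf_int,
    integral_pi_eq_integral_update p hf'_int, ← integral_const_mul]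
  refine integral_congr_ae ?_
  filter_upwards [(hupdate.integrable_comp_of_integrable hf_int).prod_right_ae,
    (hupdate.integrable_comp_of_integrable hxf_int).prod_right_ae,
    (hupdate.integrable_comp_of_integrable hf'_int).prod_right_ae] with ω h_int hx_int h'_int
  simp only [Function.comp_apply, Function.update_self] at h_int hx_int h'_int ⊢
  exact integral_sub_mul_gaussianReal
    (fun x ↦ by simpa using hf (Function.update ω p x)) h_int hx_int h'_int

end Stein

section Gibbs

variable {κ : Type*} {S : Finset κ}

/-- The partition function `Z = ∑_{σ ∈ S} exp (H σ)` of the energy function `H` on the finite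
configuration space `S`; the inverse temperature is absorbed into `H`. -/
def partitionFunction (S : Finset κ) (H : κ → ℝ) : ℝ :=
  ∑ σ ∈ S, Real.exp (H σ)

/-- The mass `exp (H σ) / Z` given to `σ` by the Gibbs measure on `S` with energy `H`. -/
def gibbsWeight (S : Finset κ) (H : κ → ℝ) (σ : κ) : ℝ :=
  Real.exp (H σ) / partitionFunction S H

/-- The one-replica average `⟨f⟩` of `f` under the Gibbs measure on `S` with energy `H`. Averages
over two independent replicas are iterated one-replica averages. -/
def gibbsAvg (S : Finset κ) (H f : κ → ℝ) : ℝ :=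
  ∑ σ ∈ S, gibbsWeight S H σ * f σ

lemma partitionFunction_pos (hS : S.Nonempty) (H : κ → ℝ) : 0 < partitionFunction S H :=
  sum_pos (fun _ _ ↦ Real.exp_pos _) hS

lemma exp_le_partitionFunction (H : κ → ℝ) {σ : κ} (hσ : σ ∈ S) :
    Real.exp (H σ) ≤ partitionFunction S H :=
  single_le_sum (f := fun σ ↦ Real.exp (H σ)) (fun _ _ ↦ (Real.exp_pos _).le) hσ

lemma abs_gibbsWeight_le_one (H : κ → ℝ) {σ : κ} (hσ : σ ∈ S) : |gibbsWeight S H σ| ≤ 1 := by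
  have hZ := partitionFunction_pos ⟨σ, hσ⟩ H
  rw [gibbsWeight, abs_of_pos (div_pos (Real.exp_pos _) hZ), div_le_one hZ]
  exact exp_le_partitionFunction H hσ

lemma sum_gibbsWeight (hS : S.Nonempty) (H : κ → ℝ) : ∑ σ ∈ S, gibbsWeight S H σ = 1 := by
  simp only [gibbsWeight, ← sum_div]
  exact div_self (partitionFunction_pos hS H).ne'

lemma gibbsAvg_const (hS : S.Nonempty) (H : κ → ℝ) (c : ℝ) : gibbsAvg S H (fun _ ↦ c) = c := by
  rw [gibbsAvg, ← sum_mul, sum_gibbsWeight hS, one_mul]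

lemma gibbsAvg_sub (H f g : κ → ℝ) :
    gibbsAvg S H (fun σ ↦ f σ - g σ) = gibbsAvg S H f - gibbsAvg S H g := by
  simp only [gibbsAvg, mul_sub, sum_sub_distrib]

lemma gibbsAvg_const_mul (H : κ → ℝ) (c : ℝ) (f : κ → ℝ) :
    gibbsAvg S H (fun σ ↦ c * f σ) = c * gibbsAvg S H f := by
  simp only [gibbsAvg, mul_sum, mul_left_comm]

lemma gibbsAvg_sum {ι : Type*} (t : Finset ι) (H : κ → ℝ) (f : ι → κ → ℝ) :
    gibbsAvg S H (fun σ ↦ ∑ p ∈ t, f p σ) = ∑ p ∈ t, gibbsAvg S H (f p) := by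
  simp only [gibbsAvg, mul_sum]
  exact sum_comm

lemma gibbsAvg_congr (H : κ → ℝ) {f g : κ → ℝ} (hfg : ∀ σ ∈ S, f σ = g σ) :
    gibbsAvg S H f = gibbsAvg S H g :=
  sum_congr rfl fun σ hσ ↦ by rw [hfg σ hσ]

lemma abs_gibbsAvg_le_sum (H f : κ → ℝ) : |gibbsAvg S H f| ≤ ∑ σ ∈ S, |f σ| := by
  refine (abs_sum_le_sum_abs _ _).trans (sum_le_sum fun σ hσ ↦ ?_)
  rw [abs_mul]
  exact mul_le_of_le_one_left (abs_nonneg _) (abs_gibbsWeight_le_one H hσ)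

lemma abs_log_partitionFunction_le (hS : S.Nonempty) (H : κ → ℝ) :
    |Real.log (partitionFunction S H)| ≤ Real.log S.card + ∑ σ ∈ S, |H σ| := by
  have hcard : (1 : ℝ) ≤ S.card := by exact_mod_cast hS.card_pos
  have hZ := partitionFunction_pos hS H
  have hle {σ : κ} (hσ : σ ∈ S) : |H σ| ≤ ∑ τ ∈ S, |H τ| :=
    single_le_sum (f := fun τ ↦ |H τ|) (fun _ _ ↦ abs_nonneg _) hσ
  refine abs_le.2 ⟨?_, ?_⟩
  · obtain ⟨σ, hσ⟩ := hS
    have hlog : H σ ≤ Real.log (partitionFunction S H) :=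
      (Real.le_log_iff_exp_le hZ).2 (exp_le_partitionFunction H hσ)
    linarith [hle hσ, neg_abs_le (H σ), Real.log_nonneg hcard]
  · rw [Real.log_le_iff_le_exp hZ, Real.exp_add, Real.exp_log (by linarith), ← nsmul_eq_mul]
    exact sum_le_card_nsmul _ _ _ fun σ hσ ↦
      Real.exp_le_exp.2 ((le_abs_self _).trans (hle hσ))

section Derivative

variable {H : ℝ → κ → ℝ} {H' : κ → ℝ} {u : ℝ}

lemma hasDerivAt_log_partitionFunction (hS : S.Nonempty)
    (hH : ∀ σ ∈ S, HasDerivAt (fun u ↦ H u σ) (H' σ) u) :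
    HasDerivAt (fun u ↦ Real.log (partitionFunction S (H u))) (gibbsAvg S (H u) H') u := by
  have hZ : HasDerivAt (fun u ↦ partitionFunction S (H u)) (∑ σ ∈ S, Real.exp (H u σ) * H' σ) u :=
    HasDerivAt.fun_sum fun σ hσ ↦ (hH σ hσ).exp
  refine (hZ.log (partitionFunction_pos hS _).ne').congr_deriv ?_
  simp only [gibbsAvg, gibbsWeight, sum_div, div_mul_eq_mul_div]

lemma hasDerivAt_gibbsWeight (hH : ∀ σ ∈ S, HasDerivAt (fun u ↦ H u σ) (H' σ) u) {σ : κ}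
    (hσ : σ ∈ S) :
    HasDerivAt (fun u ↦ gibbsWeight S (H u) σ)
      (gibbsWeight S (H u) σ * (H' σ - gibbsAvg S (H u) H')) u := by
  have hexp_sub_log (u : ℝ) : gibbsWeight S (H u) σ =
      Real.exp (H u σ - Real.log (partitionFunction S (H u))) := by
    rw [gibbsWeight, Real.exp_sub, Real.exp_log (partitionFunction_pos ⟨σ, hσ⟩ _)]
  simp only [hexp_sub_log]
  exact ((hH σ hσ).sub (hasDerivAt_log_partitionFunction ⟨σ, hσ⟩ hH)).exp

end Derivative

section Integral

variable {Ω : Type*} [MeasurableSpace Ω] {μ : Measure Ω} {H f : Ω → κ → ℝ}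

lemma measurable_partitionFunction (hH : Measurable H) :
    Measurable fun ω ↦ partitionFunction S (H ω) := by
  unfold partitionFunction
  fun_prop

lemma measurable_gibbsWeight (hH : Measurable H) (σ : κ) :
    Measurable fun ω ↦ gibbsWeight S (H ω) σ :=
  (Real.measurable_exp.comp (measurable_pi_iff.1 hH σ)).div (measurable_partitionFunction hH)

lemma integrable_gibbsWeight_mul (hH : Measurable H) {σ : κ} (hσ : σ ∈ S) {g : Ω → ℝ}
    (hg : Integrable g μ) : Integrable (fun ω ↦ gibbsWeight S (H ω) σ * g ω) μ :=
  hg.bdd_mul (measurable_gibbsWeight hH σ).aestronglyMeasurable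
    (ae_of_all _ fun ω ↦ abs_gibbsWeight_le_one (H ω) hσ)

lemma integrable_gibbsAvg (hH : Measurable H) (hf : ∀ σ ∈ S, Integrable (fun ω ↦ f ω σ) μ) :
    Integrable (fun ω ↦ gibbsAvg S (H ω) (f ω)) μ :=
  integrable_finsetSum _ fun σ hσ ↦ integrable_gibbsWeight_mul hH hσ (hf σ hσ)

variable [IsFiniteMeasure μ]

lemma integrable_gibbsWeight (hH : Measurable H) {σ : κ} (hσ : σ ∈ S) :
    Integrable (fun ω ↦ gibbsWeight S (H ω) σ) μ := by
  simpa using integrable_gibbsWeight_mul hH hσ (integrable_const (μ := μ) (1 : ℝ))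

lemma integrable_log_partitionFunction (hS : S.Nonempty) (hH : Measurable H)
    (hH_int : ∀ σ ∈ S, Integrable (fun ω ↦ H ω σ) μ) :
    Integrable (fun ω ↦ Real.log (partitionFunction S (H ω))) μ :=
  ((integrable_const _).add (integrable_finsetSum _ fun σ hσ ↦ (hH_int σ hσ).abs)).mono'
    (measurable_partitionFunction hH).log.aestronglyMeasurable
    (ae_of_all _ fun ω ↦ abs_log_partitionFunction_le hS (H ω))

theorem hasDerivAt_integral_log_partitionFunction (hS : S.Nonempty) {H H' : ℝ → Ω → κ → ℝ}
    {v : ℝ} {s : Set ℝ} (hs : s ∈ nhds v) (hH : ∀ u, Measurable (H u))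
    (hH_int : ∀ σ ∈ S, Integrable (fun ω ↦ H v ω σ) μ)
    (hH'_int : ∀ σ ∈ S, Integrable (fun ω ↦ H' v ω σ) μ) {bound : Ω → κ → ℝ}
    (hbound : ∀ ω, ∀ u ∈ s, ∀ σ ∈ S, |H' u ω σ| ≤ bound ω σ)
    (hbound_int : ∀ σ ∈ S, Integrable (fun ω ↦ bound ω σ) μ)
    (hderiv : ∀ ω, ∀ u ∈ s, ∀ σ ∈ S, HasDerivAt (fun u ↦ H u ω σ) (H' u ω σ) u) :
    HasDerivAt (fun u ↦ ∫ ω, Real.log (partitionFunction S (H u ω)) ∂μ)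
      (∫ ω, gibbsAvg S (H v ω) (H' v ω) ∂μ) v :=
  (hasDerivAt_integral_of_dominated_loc_of_deriv_le hs
    (.of_forall fun u ↦ (measurable_partitionFunction (hH u)).log.aestronglyMeasurable)
    (integrable_log_partitionFunction hS (hH v) hH_int)
    (integrable_gibbsAvg (hH v) hH'_int).aestronglyMeasurable
    (ae_of_all _ fun ω u hu ↦
      (abs_gibbsAvg_le_sum _ _).trans (sum_le_sum fun σ hσ ↦ hbound ω u hu σ hσ))
    (integrable_finsetSum _ hbound_int)
    (ae_of_all _ fun ω u hu ↦ hasDerivAt_log_partitionFunction hS (hderiv ω u hu))).2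

end Integral

end Gibbs

section LinearDisorder

open scoped NNReal Matrix

variable {ι κ : Type*} [Fintype ι] {S : Finset κ}

lemma measurable_mulVec (a : Matrix κ ι ℝ) : Measurable fun ω : ι → ℝ ↦ a *ᵥ ω := by
  unfold Matrix.mulVec dotProduct
  fun_prop

lemma integrable_mulVec {μ : Measure (ι → ℝ)} (hμ : ∀ p, Integrable (fun ω ↦ ω p) μ)
    (a : Matrix κ ι ℝ) (σ : κ) : Integrable (fun ω ↦ (a *ᵥ ω) σ) μ :=
  integrable_finsetSum _ fun p _ ↦ (hμ p).const_mul (a σ p)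

theorem hasDerivAt_integral_log_partitionFunction_mulVec {μ : Measure (ι → ℝ)} [IsFiniteMeasure μ]
    (hμ : ∀ p, Integrable (fun ω ↦ ω p) μ) (hS : S.Nonempty) {a a' : ℝ → Matrix κ ι ℝ} {v : ℝ}
    (ha : ∀ᶠ u in nhds v, ∀ σ ∈ S, ∀ p, HasDerivAt (fun u ↦ a u σ p) (a' u σ p) u)
    (ha' : ∀ σ ∈ S, ∀ p, ContinuousAt (fun u ↦ a' u σ p) v) :
    HasDerivAt (fun u ↦ ∫ ω, Real.log (partitionFunction S (a u *ᵥ ω)) ∂μ)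
      (∫ ω, gibbsAvg S (a v *ᵥ ω) (a' v *ᵥ ω) ∂μ) v := by
  have ha'_bdd : ∀ᶠ u in nhds v, ∀ σ ∈ S, ∀ p, |a' u σ p| ≤ |a' v σ p| + 1 := by
    simp only [Finset.eventually_all, Filter.eventually_all]
    exact fun σ hσ p ↦
      ((ha' σ hσ p).abs.eventually (gt_mem_nhds (lt_add_one _))).mono fun _ ↦ le_of_lt
  refine hasDerivAt_integral_log_partitionFunction (H := fun u ω ↦ a u *ᵥ ω)
    (H' := fun u ω ↦ a' u *ᵥ ω) hS (ha.and ha'_bdd)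
    (fun u ↦ measurable_mulVec (a u)) (fun σ _ ↦ integrable_mulVec hμ (a v) σ)
    (fun σ _ ↦ integrable_mulVec hμ (a' v) σ)
    (bound := fun ω σ ↦ ∑ p, (|a' v σ p| + 1) * |ω p|) ?_
    (fun σ _ ↦ integrable_finsetSum _ fun p _ ↦ (hμ p).abs.const_mul _) ?_
  · intro ω u hu σ hσ
    refine (abs_sum_le_sum_abs _ _).trans (sum_le_sum fun p _ ↦ ?_)
    rw [abs_mul]
    exact mul_le_mul_of_nonneg_right (hu.2 σ hσ p) (abs_nonneg _)
  · exact fun ω u hu σ hσ ↦ HasDerivAt.fun_sum fun p _ ↦ (hu.1 σ hσ p).mul_const (ω p)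

/-- The law of independent centered Gaussian variables with variances `s`. -/
abbrev centeredGaussianPi (s : ι → ℝ≥0) : Measure (ι → ℝ) :=
  Measure.pi fun i ↦ gaussianReal 0 (s i)

/-- The covariance `E[(b ω)_σ (a ω)_τ]` of the linear images `b ω` and `a ω` of a vector `ω` of
independent centered Gaussian variables with variances `s`, given by its closed formula. -/
def gaussianCrossCov (s : ι → ℝ≥0) (b a : Matrix κ ι ℝ) (σ τ : κ) : ℝ :=
  ∑ p, s p * b σ p * a τ p

variable {s : ι → ℝ≥0}

lemma integrable_eval_centeredGaussianPi (p : ι) :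
    Integrable (fun ω ↦ ω p) (centeredGaussianPi s) :=
  integrable_eval IsGaussian.integrable_id

lemma integral_eval_mul_gibbsWeight_mulVec (a : Matrix κ ι ℝ) {σ : κ} (hσ : σ ∈ S) (p : ι) :
    ∫ ω, ω p * gibbsWeight S (a *ᵥ ω) σ ∂centeredGaussianPi s =
      s p * ∫ ω, gibbsWeight S (a *ᵥ ω) σ * (a σ p - gibbsAvg S (a *ᵥ ω) fun τ ↦ a τ p)
        ∂centeredGaussianPi s := by
  classical
  have hmeas := measurable_mulVec a
  have hderiv (ω : ι → ℝ) (τ : κ) :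
      HasDerivAt (fun x ↦ (a *ᵥ Function.update ω p x) τ) (a τ p) (ω p) := by
    refine (HasDerivAt.fun_sum fun q _ ↦
      (hasDerivAt_pi.1 (hasDerivAt_update ω p (ω p)) q).const_mul (a τ q)).congr_deriv ?_
    simp [Pi.single_apply]
  have hstein := integral_eval_sub_mul_pi_gaussianReal (m := fun _ ↦ 0) (s := s) (p := p)
    (f := fun ω ↦ gibbsWeight S (a *ᵥ ω) σ)
    (f' := fun ω ↦ gibbsWeight S (a *ᵥ ω) σ * (a σ p - gibbsAvg S (a *ᵥ ω) fun τ ↦ a τ p))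
    (fun ω ↦ by simpa only [Function.update_eq_self] using
      hasDerivAt_gibbsWeight (fun τ _ ↦ hderiv ω τ) hσ)
    (integrable_gibbsWeight hmeas hσ)
    (by simpa only [sub_zero, mul_comm] using
      integrable_gibbsWeight_mul hmeas hσ (integrable_eval_centeredGaussianPi p))
    (integrable_gibbsWeight_mul hmeas hσ ((integrable_const _).sub
      (integrable_gibbsAvg hmeas fun τ _ ↦ integrable_const _)))
  simpa only [sub_zero] using hstein

lemma gaussianCrossCov_sub_gibbsAvg (H : κ → ℝ) (b a : Matrix κ ι ℝ) (σ : κ) :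
    gaussianCrossCov s b a σ σ - gibbsAvg S H (gaussianCrossCov s b a σ) =
      ∑ p, b σ p * (s p * (a σ p - gibbsAvg S H fun τ ↦ a τ p)) := by
  unfold gaussianCrossCov
  rw [gibbsAvg_sum, ← sum_sub_distrib]
  refine sum_congr rfl fun p _ ↦ ?_
  rw [gibbsAvg_const_mul]
  ring

lemma integral_gibbsWeight_mul_mulVec (a b : Matrix κ ι ℝ) {σ : κ} (hσ : σ ∈ S) :
    ∫ ω, gibbsWeight S (a *ᵥ ω) σ * (b *ᵥ ω) σ ∂centeredGaussianPi s =
      ∫ ω, gibbsWeight S (a *ᵥ ω) σ * (gaussianCrossCov s b a σ σ -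
        gibbsAvg S (a *ᵥ ω) (gaussianCrossCov s b a σ)) ∂centeredGaussianPi s := by
  have hmeas := measurable_mulVec a
  have hweight_int {g : (ι → ℝ) → ℝ} (hg : Integrable g (centeredGaussianPi s)) :=
    integrable_gibbsWeight_mul hmeas hσ hg
  have hcentered_int (p : ι) : Integrable (fun ω ↦ gibbsWeight S (a *ᵥ ω) σ *
      (a σ p - gibbsAvg S (a *ᵥ ω) fun τ ↦ a τ p)) (centeredGaussianPi s) :=
    hweight_int ((integrable_const _).sub (integrable_gibbsAvg hmeas fun τ _ ↦ integrable_const _))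
  calc ∫ ω, gibbsWeight S (a *ᵥ ω) σ * (b *ᵥ ω) σ ∂centeredGaussianPi s
      = ∫ ω, ∑ p, b σ p * (gibbsWeight S (a *ᵥ ω) σ * ω p) ∂centeredGaussianPi s := by
        simp only [Matrix.mulVec, dotProduct, mul_sum, mul_left_comm]
    _ = ∑ p, b σ p * ∫ ω, gibbsWeight S (a *ᵥ ω) σ * ω p ∂centeredGaussianPi s := by
        rw [integral_finsetSum _ fun p _ ↦
          (hweight_int (integrable_eval_centeredGaussianPi p)).const_mul _]
        simp only [integral_const_mul]
    _ = ∑ p, b σ p * (s p * ∫ ω, gibbsWeight S (a *ᵥ ω) σ *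
          (a σ p - gibbsAvg S (a *ᵥ ω) fun τ ↦ a τ p) ∂centeredGaussianPi s) := by
        simp only [← integral_eval_mul_gibbsWeight_mulVec a hσ, mul_comm]
    _ = ∫ ω, ∑ p, b σ p * (s p * (gibbsWeight S (a *ᵥ ω) σ *
          (a σ p - gibbsAvg S (a *ᵥ ω) fun τ ↦ a τ p))) ∂centeredGaussianPi s := by
        rw [integral_finsetSum _ fun p _ ↦ ((hcentered_int p).const_mul _).const_mul _]
        simp only [integral_const_mul]
    _ = _ := by
        simp only [gaussianCrossCov_sub_gibbsAvg, mul_sum, mul_left_comm]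

theorem integral_gibbsAvg_mulVec (a b : Matrix κ ι ℝ) :
    ∫ ω, gibbsAvg S (a *ᵥ ω) (b *ᵥ ω) ∂centeredGaussianPi s =
      ∫ ω, gibbsAvg S (a *ᵥ ω) (fun σ ↦ gaussianCrossCov s b a σ σ -
        gibbsAvg S (a *ᵥ ω) (gaussianCrossCov s b a σ)) ∂centeredGaussianPi s := by
  have hmeas := measurable_mulVec a
  calc ∫ ω, gibbsAvg S (a *ᵥ ω) (b *ᵥ ω) ∂centeredGaussianPi s
      = ∑ σ ∈ S, ∫ ω, gibbsWeight S (a *ᵥ ω) σ * (b *ᵥ ω) σ ∂centeredGaussianPi s :=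
        integral_finsetSum _ fun σ hσ ↦ integrable_gibbsWeight_mul hmeas hσ
          (integrable_mulVec integrable_eval_centeredGaussianPi b σ)
    _ = ∑ σ ∈ S, ∫ ω, gibbsWeight S (a *ᵥ ω) σ * (gaussianCrossCov s b a σ σ -
          gibbsAvg S (a *ᵥ ω) (gaussianCrossCov s b a σ)) ∂centeredGaussianPi s :=
        sum_congr rfl fun σ hσ ↦ integral_gibbsWeight_mul_mulVec a b hσ
    _ = _ := .symm <| integral_finsetSum _ fun σ hσ ↦ integrable_gibbsWeight_mul hmeas hσ
        ((integrable_const _).sub (integrable_gibbsAvg hmeas fun τ _ ↦ integrable_const _))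

theorem hasDerivAt_integral_log_partitionFunction_centeredGaussianPi (hS : S.Nonempty)
    {a a' : ℝ → Matrix κ ι ℝ} {v : ℝ}
    (ha : ∀ᶠ u in nhds v, ∀ σ ∈ S, ∀ p, HasDerivAt (fun u ↦ a u σ p) (a' u σ p) u)
    (ha' : ∀ σ ∈ S, ∀ p, ContinuousAt (fun u ↦ a' u σ p) v) :
    HasDerivAt (fun u ↦ ∫ ω, Real.log (partitionFunction S (a u *ᵥ ω)) ∂centeredGaussianPi s)
      (∫ ω, gibbsAvg S (a v *ᵥ ω) (fun σ ↦ gaussianCrossCov s (a' v) (a v) σ σ -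
        gibbsAvg S (a v *ᵥ ω) (gaussianCrossCov s (a' v) (a v) σ)) ∂centeredGaussianPi s) v :=
  integral_gibbsAvg_mulVec (s := s) (a v) (a' v) ▸
    hasDerivAt_integral_log_partitionFunction_mulVec integrable_eval_centeredGaussianPi hS ha ha'

end LinearDisorder

section GOE

open scoped NNReal Matrix

section FoldUpper

variable {ι M : Type*} [LinearOrder ι] [AddCommMonoid M]

/-- Moves the values of `f` at the pairs `(j, i)` with `i < j` to `(i, j)` and adds them to the
values there. A symmetric matrix is stored by its entries `(i, j)` with `i ≤ j`, and this turns sums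
over all entries into sums over the stored ones. -/
def foldUpper (f : ι × ι → M) (p : ι × ι) : M :=
  (if p.1 ≤ p.2 then f p else 0) + if p.1 < p.2 then f p.swap else 0

lemma sum_foldUpper [Fintype ι] (f : ι × ι → M) : ∑ p, foldUpper f p = ∑ p, f p := by
  have hswap : ∑ p : ι × ι, (if p.1 < p.2 then f p.swap else 0) =
      ∑ p : ι × ι, if p.2 < p.1 then f p else 0 :=
    (Equiv.prodComm ι ι).sum_comp fun p ↦ if p.2 < p.1 then f p else 0
  simp only [foldUpper, sum_add_distrib, hswap]
  rw [← sum_add_distrib]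
  refine sum_congr rfl fun p _ ↦ ?_
  rcases le_or_gt p.1 p.2 with hle | hgt
  · simp [hle, hle.not_gt]
  · simp [hgt, hgt.not_ge]

end FoldUpper

/-- The variance of the entry `p` of a GOE matrix. -/
def goeVariance {N : ℕ} (p : Fin N × Fin N) : ℝ≥0 :=
  if p.1 = p.2 then 2 else 1

lemma goeMeasure_eq_centeredGaussianPi (N : ℕ) : goeMeasure N = centeredGaussianPi goeVariance :=
  rfl

variable {N : ℕ}

/-- The coefficients of the bilinear form `∑ i, ∑ j, J i j * x i * y j` of a GOE matrix `J`, as a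
linear form in the independent entries of `J`. -/
def goeCoeff (x y : Fin N → ℝ) : Fin N × Fin N → ℝ :=
  foldUpper fun p ↦ x p.1 * y p.2

lemma goeCoeff_comm (x y : Fin N → ℝ) : goeCoeff x y = goeCoeff y x := by
  ext p
  rcases lt_trichotomy p.1 p.2 with hlt | heq | hgt
  · simp only [goeCoeff, foldUpper, hlt, hlt.le, if_true, Prod.fst_swap, Prod.snd_swap]
    ring
  · simp [goeCoeff, foldUpper, heq, mul_comm]
  · simp [goeCoeff, foldUpper, hgt.not_gt, hgt.not_ge]

lemma goeCoeff_dotProduct (x y : Fin N → ℝ) (ω : Fin N × Fin N → ℝ) :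
    goeCoeff x y ⬝ᵥ ω = ∑ i, ∑ j, Jmat ω i j * x i * y j := by
  rw [← Fintype.sum_prod_type' fun i j ↦ Jmat ω i j * x i * y j, ← sum_foldUpper]
  refine sum_congr rfl fun ⟨i, j⟩ _ ↦ ?_
  rcases lt_trichotomy i j with hlt | rfl | hgt
  · simp only [goeCoeff, foldUpper, Jmat, hlt, hlt.le, hlt.not_ge, if_true, if_false,
      Prod.fst_swap, Prod.snd_swap]
    ring
  · simp only [goeCoeff, foldUpper, Jmat, le_refl, lt_irrefl, if_true, if_false]
    ring
  · simp [goeCoeff, foldUpper, hgt.not_gt, hgt.not_ge]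

theorem sum_goeVariance_mul_goeCoeff_mul_goeCoeff (x y z w : Fin N → ℝ) :
    ∑ p, goeVariance p * goeCoeff x y p * goeCoeff z w p =
      (x ⬝ᵥ z) * (y ⬝ᵥ w) + (x ⬝ᵥ w) * (y ⬝ᵥ z) := by
  have hfold (p : Fin N × Fin N) : goeVariance p * goeCoeff x y p * goeCoeff z w p =
      foldUpper (fun p ↦ x p.1 * z p.1 * (y p.2 * w p.2) + x p.1 * w p.1 * (y p.2 * z p.2)) p := by
    rcases lt_trichotomy p.1 p.2 with hlt | heq | hgt
    · simp only [goeCoeff, foldUpper, goeVariance, hlt, hlt.le, hlt.ne, if_true, if_false,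
        Prod.fst_swap, Prod.snd_swap, NNReal.coe_one]
      ring
    · simp only [goeCoeff, foldUpper, goeVariance, heq, le_refl, lt_irrefl, if_true, if_false,
        NNReal.coe_ofNat]
      ring
    · simp [goeCoeff, foldUpper, hgt.not_gt, hgt.not_ge]
  simp only [hfold, sum_foldUpper]
  simp only [Fintype.sum_prod_type, sum_add_distrib, dotProduct, sum_mul_sum]

lemma hasDerivAt_goeCoeff_self {x : ℝ → Fin N → ℝ} {x' : Fin N → ℝ} {u : ℝ}
    (hx : ∀ i, HasDerivAt (fun u ↦ x u i) (x' i) u) (p : Fin N × Fin N) :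
    HasDerivAt (fun u ↦ goeCoeff (x u) (x u) p) (2 * goeCoeff x' (x u) p) u := by
  have hprod (q : Fin N × Fin N) :
      HasDerivAt (fun u ↦ x u q.1 * x u q.2) (x' q.1 * x u q.2 + x u q.1 * x' q.2) u :=
    (hx q.1).mul (hx q.2)
  have hfold : HasDerivAt (fun u ↦ goeCoeff (x u) (x u) p)
      (foldUpper (fun q ↦ x' q.1 * x u q.2 + x u q.1 * x' q.2) p) u := by
    unfold goeCoeff foldUpper
    refine HasDerivAt.fun_add ?_ ?_ <;> split_ifs
    exacts [hprod p, hasDerivAt_const u 0, hprod p.swap, hasDerivAt_const u 0]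
  refine hfold.congr_deriv ?_
  rw [two_mul]
  nth_rw 2 [goeCoeff_comm]
  simp only [goeCoeff, foldUpper]
  split_ifs <;> ring

lemma continuousAt_goeCoeff {x y : ℝ → Fin N → ℝ} {u : ℝ} (hx : ∀ i, ContinuousAt (x · i) u)
    (hy : ∀ i, ContinuousAt (y · i) u) (p : Fin N × Fin N) :
    ContinuousAt (fun u ↦ goeCoeff (x u) (y u) p) u := by
  unfold goeCoeff foldUpper
  split_ifs <;> fun_prop

end GOE

section Interpolation

open scoped Matrix

variable {N : ℕ} (α : ℚ) (β v : ℝ)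

/-- The shifted configuration `τ i = σ i - √v (2α - 1)`. -/
def shiftedSpin (σ : Fin N → Bool) (i : Fin N) : ℝ :=
  spin (σ i) - √v * (2 * (α : ℝ) - 1)

/-- The matrix which maps the GOE entries to the energies `β * Hv α v ω σ`. -/
def hamiltonianCoeff : Matrix (Fin N → Bool) (Fin N × Fin N) ℝ :=
  .of fun σ ↦ (β * (√N)⁻¹) • goeCoeff (shiftedSpin α v σ) (shiftedSpin α v σ)

/-- The derivative of `hamiltonianCoeff α β v` in `v > 0`. -/
def hamiltonianCoeffDeriv : Matrix (Fin N → Bool) (Fin N × Fin N) ℝ :=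
  .of fun σ ↦ (2 * (β * (√N)⁻¹)) •
    goeCoeff (fun _ ↦ -(1 / (2 * √v) * (2 * (α : ℝ) - 1))) (shiftedSpin α v σ)

lemma hamiltonianCoeff_mulVec (ω : Fin N × Fin N → ℝ) :
    hamiltonianCoeff α β v *ᵥ ω = fun σ ↦ β * Hv α v ω σ := by
  ext σ
  simp only [hamiltonianCoeff, Matrix.mulVec, Matrix.of_apply, smul_dotProduct,
    goeCoeff_dotProduct, smul_eq_mul, Hv, shiftedSpin, mul_assoc]

lemma FN_eq_integral_log_partitionFunction :
    FN N α v β = (N : ℝ)⁻¹ * ∫ ω, Real.log (partitionFunction (SNfinset N α)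
      (hamiltonianCoeff α β v *ᵥ ω)) ∂centeredGaussianPi goeVariance := by
  simp only [FN, partitionFunction, hamiltonianCoeff_mulVec, goeMeasure_eq_centeredGaussianPi]

lemma gibbs2_eq_gibbsAvg_gibbsAvg (ω : Fin N × Fin N → ℝ)
    (h : (Fin N → Bool) → (Fin N → Bool) → ℝ) :
    gibbs2 N α v β ω h = gibbsAvg (SNfinset N α) (hamiltonianCoeff α β v *ᵥ ω) fun σ ↦
      gibbsAvg (SNfinset N α) (hamiltonianCoeff α β v *ᵥ ω) (h σ) := by
  simp only [gibbs2, gibbsAvg, gibbsWeight, partitionFunction, hamiltonianCoeff_mulVec, sum_div,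
    mul_sum]
  refine sum_congr rfl fun σ _ ↦ sum_congr rfl fun τ _ ↦ ?_
  ring

lemma integrable_gibbs2 (h : (Fin N → Bool) → (Fin N → Bool) → ℝ) :
    Integrable (fun ω ↦ gibbs2 N α v β ω h) (centeredGaussianPi goeVariance) := by
  simp only [gibbs2_eq_gibbsAvg_gibbsAvg]
  have hmeas := measurable_mulVec (hamiltonianCoeff (N := N) α β v)
  exact integrable_gibbsAvg hmeas fun σ _ ↦ integrable_gibbsAvg hmeas fun τ _ ↦ integrable_const _

variable {v}

lemma hasDerivAt_shiftedSpin (hv : 0 < v) (σ : Fin N → Bool) (i : Fin N) :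
    HasDerivAt (fun u ↦ shiftedSpin α u σ i) (-(1 / (2 * √v) * (2 * (α : ℝ) - 1))) v :=
  ((Real.hasDerivAt_sqrt hv.ne').mul_const _).const_sub _

lemma hasDerivAt_hamiltonianCoeff (hv : 0 < v) (σ : Fin N → Bool) (p : Fin N × Fin N) :
    HasDerivAt (fun u ↦ hamiltonianCoeff α β u σ p) (hamiltonianCoeffDeriv α β v σ p) v :=
  ((hasDerivAt_goeCoeff_self (hasDerivAt_shiftedSpin α hv σ) p).const_mul _).congr_deriv <| by
    simp only [hamiltonianCoeffDeriv, Matrix.of_apply, Pi.smul_apply, smul_eq_mul]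
    ring

lemma continuousAt_hamiltonianCoeffDeriv (hv : 0 < v) (σ : Fin N → Bool) (p : Fin N × Fin N) :
    ContinuousAt (fun u ↦ hamiltonianCoeffDeriv α β u σ p) v := by
  have hsqrt : 2 * √v ≠ 0 := by positivity
  exact (continuousAt_goeCoeff (fun _ ↦ by fun_prop (disch := exact hsqrt))
    (fun i ↦ (hasDerivAt_shiftedSpin α hv σ i).continuousAt) p).const_mul _

variable {α}

lemma mem_SNfinset {σ : Fin N → Bool} :
    σ ∈ SNfinset N α ↔ ∑ i, spin (σ i) = (N : ℝ) * (2 * (α : ℝ) - 1) := by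
  simp [SNfinset]

lemma SNfinset_nonempty (hα : α ≤ 1) (hint : alphaIntegral α N) : (SNfinset N α).Nonempty := by
  obtain ⟨k, hk⟩ := hint
  have hkN : k ≤ N := by
    exact_mod_cast hk ▸ mul_le_of_le_one_left (Nat.cast_nonneg (α := ℚ) N) hα
  have hkα : (α : ℝ) * N = k := by exact_mod_cast hk
  have hspin (b : Bool) : spin b = 2 * (if b then 1 else 0) - 1 := by
    cases b <;> norm_num [spin]
  refine ⟨fun i ↦ decide ((i : ℕ) < k), mem_SNfinset.2 ?_⟩
  simp only [hspin, decide_eq_true_eq, sum_sub_distrib, ← mul_sum, sum_boole,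
    Fin.card_filter_val_lt, min_eq_right hkN, sum_const, card_univ, Fintype.card_fin]
  rw [← hkα, nsmul_one]
  ring

lemma sum_shiftedSpin (v : ℝ) {σ : Fin N → Bool} (hσ : σ ∈ SNfinset N α) :
    ∑ i, shiftedSpin α v σ i = N * ((2 * (α : ℝ) - 1) * (1 - √v)) := by
  simp only [shiftedSpin, sum_sub_distrib, mem_SNfinset.1 hσ, sum_const, card_univ,
    Fintype.card_fin, nsmul_eq_mul]
  ring

lemma R12_self (hN : N ≠ 0) (v : ℝ) {σ : Fin N → Bool} (hσ : σ ∈ SNfinset N α) :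
    R12 α v σ σ = Tva α v := by
  have hspin_sq (b : Bool) : spin b * spin b = 1 := by cases b <;> norm_num [spin]
  have hexpand (b : Bool) (c : ℝ) : (spin b - c) * (spin b - c) = 1 + c ^ 2 - 2 * c * spin b := by
    linear_combination hspin_sq b
  simp only [R12, Tva, hexpand, sum_sub_distrib, ← mul_sum, mem_SNfinset.1 hσ, sum_const,
    card_univ, Fintype.card_fin, nsmul_eq_mul]
  field_simp
  ring

lemma dotProduct_shiftedSpin (hN : N ≠ 0) (v : ℝ) (σ τ : Fin N → Bool) :
    shiftedSpin α v σ ⬝ᵥ shiftedSpin α v τ = N * R12 α v σ τ := by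
  simp only [R12, dotProduct, shiftedSpin]
  field_simp

theorem gaussianCrossCov_hamiltonianCoeff (hN : N ≠ 0) (v : ℝ) (σ : Fin N → Bool)
    {τ : Fin N → Bool} (hτ : τ ∈ SNfinset N α) :
    gaussianCrossCov goeVariance (hamiltonianCoeffDeriv α β v) (hamiltonianCoeff α β v) σ τ =
      N * (β * (-2 * β * (2 * (α : ℝ) - 1) ^ 2 * ((1 - √v) / √v))) * R12 α v σ τ := by
  set m : ℝ := -(1 / (2 * √v) * (2 * (α : ℝ) - 1)) with hm
  have hsqrtN : (√N)⁻¹ ^ 2 = (N : ℝ)⁻¹ := by rw [inv_pow, Real.sq_sqrt N.cast_nonneg]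
  have hconst_dotProduct :
      (fun _ ↦ m) ⬝ᵥ shiftedSpin α v τ = m * (N * ((2 * (α : ℝ) - 1) * (1 - √v))) := by
    rw [dotProduct, ← mul_sum, sum_shiftedSpin v hτ]
  calc gaussianCrossCov goeVariance (hamiltonianCoeffDeriv α β v) (hamiltonianCoeff α β v) σ τ
      = 2 * β ^ 2 * (√N)⁻¹ ^ 2 * ∑ p, goeVariance p *
          goeCoeff (fun _ ↦ m) (shiftedSpin α v σ) p *
          goeCoeff (shiftedSpin α v τ) (shiftedSpin α v τ) p := by
        simp only [gaussianCrossCov, hamiltonianCoeffDeriv, hamiltonianCoeff, Matrix.of_apply,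
          Pi.smul_apply, smul_eq_mul, mul_sum, ← hm]
        exact sum_congr rfl fun p _ ↦ by ring
    _ = _ := by
        rw [sum_goeVariance_mul_goeCoeff_mul_goeCoeff, hconst_dotProduct,
          dotProduct_shiftedSpin hN, hsqrtN, hm]
        field_simp
        ring

lemma gibbsAvg_gaussianCrossCov_sub (hN : N ≠ 0) (hS : (SNfinset N α).Nonempty) (v : ℝ)
    (ω : Fin N × Fin N → ℝ) :
    gibbsAvg (SNfinset N α) (hamiltonianCoeff α β v *ᵥ ω) (fun σ ↦
        gaussianCrossCov goeVariance (hamiltonianCoeffDeriv α β v) (hamiltonianCoeff α β v) σ σ -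
        gibbsAvg (SNfinset N α) (hamiltonianCoeff α β v *ᵥ ω)
          (gaussianCrossCov goeVariance (hamiltonianCoeffDeriv α β v) (hamiltonianCoeff α β v) σ)) =
      N * (β * (-2 * β * (2 * (α : ℝ) - 1) ^ 2 * ((1 - √v) / √v))) *
        (Tva α v - gibbs2 N α v β ω (R12 α v)) := by
  rw [gibbs2_eq_gibbsAvg_gibbsAvg, gibbsAvg_sub, mul_sub,
    ← gibbsAvg_const hS (hamiltonianCoeff α β v *ᵥ ω) (Tva α v), ← gibbsAvg_const_mul,
    ← gibbsAvg_const_mul]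
  congr 1
  · refine gibbsAvg_congr _ fun σ hσ ↦ ?_
    rw [gaussianCrossCov_hamiltonianCoeff β hN v σ hσ, R12_self hN v hσ]
  · refine gibbsAvg_congr _ fun σ _ ↦ ?_
    rw [← gibbsAvg_const_mul]
    exact gibbsAvg_congr _ fun τ hτ ↦ gaussianCrossCov_hamiltonianCoeff β hN v σ hτ

end Interpolation

end

theorem statement8_general (N : ℕ) (hN : 1 ≤ N) (β : ℝ) (α : ℚ) (hα : α ≤ 1)
    (hint : alphaIntegral α N) (v : ℝ) (hv : 0 < v) :
    HasDerivAt (fun v ↦ FN N α v β)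
      (β * (-2 * β * (2 * (α : ℝ) - 1) ^ 2 * ((1 - √v) / √v) *
        (Tva α v - Egibbs2 N α v β (R12 α v)))) v := by
  have hN0 : N ≠ 0 := Nat.one_le_iff_ne_zero.1 hN
  have hS := SNfinset_nonempty hα hint
  have hderiv := (hasDerivAt_integral_log_partitionFunction_centeredGaussianPi
    (s := goeVariance) hS (a := hamiltonianCoeff α β) (a' := hamiltonianCoeffDeriv α β)
    ((eventually_gt_nhds hv).mono fun u hu σ _ p ↦ hasDerivAt_hamiltonianCoeff α β hu σ p)
    (fun σ _ p ↦ continuousAt_hamiltonianCoeffDeriv α β hv σ p)).const_mul (N : ℝ)⁻¹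
  simp only [FN_eq_integral_log_partitionFunction]
  refine hderiv.congr_deriv ?_
  simp only [gibbsAvg_gaussianCrossCov_sub β hN0 hS v, integral_const_mul]
  rw [integral_sub (integrable_const _) (integrable_gibbs2 α β v _), integral_const,
    probReal_univ, one_smul, Egibbs2, goeMeasure_eq_centeredGaussianPi]
  field_simp

/-- For every `N ≥ 1`, `β > 0`, `α ∈ (0,1/2)` with `αN` an integer, the map
`v ↦ F_N(v,β;α)` is differentiable on `(0,1)` and
`(1/β) ∂_v F_N(v,β;α) = −2β(2α−1)²((1−√v)/√v) · E[T(v,α) − ⟨R₁₂⟩_v]`. -/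
theorem statement8 (N : ℕ) (hN : 1 ≤ N) (β : ℝ) (hβ : 0 < β)
    (α : ℚ) (hα0 : 0 < α) (hα : α < 1 / 2) (hint : alphaIntegral α N)
    (v : ℝ) (hv : v ∈ Set.Ioo (0 : ℝ) 1) :
    HasDerivAt (fun v => FN N α v β)
      (β * (-2 * β * (2 * (α : ℝ) - 1) ^ 2 * ((1 - Real.sqrt v) / Real.sqrt v) *
        (Tva α v - Egibbs2 N α v β (fun σ₁ σ₂ => R12 α v σ₁ σ₂)))) v :=
  statement8_general N hN β α (hα.le.trans (by norm_num)) hint v hv.1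
end
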